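/- arXiv:1211.0738 — 2 statements merged into one kernel-verified Lean document; each statement's English description precedes it below -/
import Mathlib

section
/- Assume α = 1, α' = 2, 2β ≤ β', 2γ ≤ γ', and set Q = (x, y^β, z^γ)R. Then (I³ :_R Q²)/(I³ :_R Q) ≅ (R/Q)^{⊕3}. -/
open IsLocalRing

/-! Let `x` and `y` be the rows of the matrix, so that the entries of `x` generate `Q` and those of
`α = y ⨯₃ x` generate `I`. Over `R[X₀, X₁, X₂]` the linear forms `x ⬝ᵥ X` and `y ⬝ᵥ X` form a
regular sequence and generate the kernel of `X i ↦ α i * T`, so they present the Rees algebra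
`R[IT]`. As the entries of `y` lie in `Q ^ 2`, we have `y ⬝ᵥ X = x ⬝ᵥ G` for a vector `G` of linear
forms with coefficients in `Q`, and in `R[IT]` the vector `X ⨯₃ G`, being orthogonal to `X` and to
`G`, becomes a multiple `d * T ^ 2` of `x`.

The Koszul relations of `x`, lifted to `R[X₀, X₁, X₂]`, show that `I ^ 3 : Q = I ^ 3 + d * I`. An
element `ξ` of `I ^ 3 : Q ^ 2` therefore satisfies `x i * ξ ≡ d * (z *ᵥ α) i` modulo `I ^ 3` for a
matrix `z`, and lifting again shows that `z` is skew-symmetric modulo `Q`. Hence `z` acts on `α` as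
`s ⨯₃ ·` for a vector `s` modulo `Q`. Every `s` occurs, and `ξ` lies in `I ^ 3 : Q` exactly when
the entries of `s` lie in `Q`. -/

open Polynomial RingTheory.Sequence

section Regularity

variable {R : Type*} [CommRing R]

lemma isSMulRegular_quotient_iff_forall_mul_mem {J : Ideal R} {r : R} :
    IsSMulRegular (R ⧸ J) r ↔ ∀ s, r * s ∈ J → s ∈ J :=
  isSMulRegular_quotient_iff_mem_of_smul_mem J r

lemma isSMulRegular_quotient_bot_iff {r : R} :
    IsSMulRegular (R ⧸ (⊥ : Ideal R)) r ↔ IsSMulRegular R r := by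
  rw [isSMulRegular_quotient_iff_forall_mul_mem, isSMulRegular_iff_right_eq_zero_of_smul]
  rfl

lemma isWeaklyRegular_concat_iff {rs : List R} {r : R} :
    IsWeaklyRegular R (rs ++ [r]) ↔
      IsWeaklyRegular R rs ∧ IsSMulRegular (R ⧸ Ideal.ofList rs) r := by
  rw [isWeaklyRegular_append_iff, isWeaklyRegular_singleton_iff, smul_eq_mul, Ideal.mul_top]

lemma isWeaklyRegular_pair_iff {r s : R} :
    IsWeaklyRegular R [r, s] ↔ IsSMulRegular R r ∧ IsSMulRegular (R ⧸ Ideal.span {r}) s := by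
  rw [← isWeaklyRegular_singleton_iff, ← Ideal.ofList_singleton]
  exact isWeaklyRegular_concat_iff (rs := [r])

lemma isWeaklyRegular_triple_iff {r s t : R} :
    IsWeaklyRegular R [r, s, t] ↔
      IsWeaklyRegular R [r, s] ∧ IsSMulRegular (R ⧸ Ideal.span {r, s}) t := by
  rw [Ideal.span_insert, ← Ideal.ofList_singleton s, ← Ideal.ofList_cons]
  exact isWeaklyRegular_concat_iff (rs := [r, s])

lemma isSMulRegular_quotient_of_sub_mem {J : Ideal R} {r s : R} (h : r - s ∈ J)
    (hs : IsSMulRegular (R ⧸ J) s) : IsSMulRegular (R ⧸ J) r := by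
  rw [isSMulRegular_quotient_iff_forall_mul_mem] at hs ⊢
  refine fun t ht => hs t ?_
  have hst : s * t = r * t - (r - s) * t := by ring
  exact hst ▸ sub_mem ht (J.mul_mem_right t h)

lemma isSMulRegular_quotient_sup_swap {J : Ideal R} {r s : R}
    (hr : IsSMulRegular (R ⧸ J) r) (hs : IsSMulRegular (R ⧸ (Ideal.span {r} ⊔ J)) s) :
    IsSMulRegular (R ⧸ (Ideal.span {s} ⊔ J)) r := by
  rw [isSMulRegular_quotient_iff_forall_mul_mem] at hr hs ⊢
  intro m hm
  obtain ⟨n, j, hj, hnj⟩ := Ideal.mem_span_singleton_sup.1 hm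
  have hn : n ∈ Ideal.span {r} ⊔ J :=
    hs n (Ideal.mem_span_singleton_sup.2 ⟨m, -j, neg_mem hj, by linear_combination -hnj⟩)
  obtain ⟨n', j', hj', rfl⟩ := Ideal.mem_span_singleton_sup.1 hn
  refine Ideal.mem_span_singleton_sup.2 ⟨n', m - n' * s, hr _ ?_, by ring⟩
  have hj'' : r * (m - n' * s) = j' * s + j := by linear_combination -hnj
  exact hj'' ▸ add_mem (J.mul_mem_right s hj') hj

end Regularity

section LinearPolynomial

variable {R : Type*} [CommRing R] {J : Ideal R} {e k h : R}

lemma isSMulRegular_quotient_map_C (hk : IsSMulRegular (R ⧸ J) k) :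
    IsSMulRegular (R[X] ⧸ J.map C) (C k) := by
  simp only [isSMulRegular_quotient_iff_forall_mul_mem, Ideal.mem_map_C_iff, coeff_C_mul] at hk ⊢
  exact fun p hp n => hk _ (hp n)

lemma isSMulRegular_quotient_map_C_X : IsSMulRegular (R[X] ⧸ J.map C) (X : R[X]) := by
  simp only [isSMulRegular_quotient_iff_forall_mul_mem, Ideal.mem_map_C_iff]
  exact fun p hp n => by simpa using hp (n + 1)

lemma mem_map_C_of_linear_mul_add_C_mem (he : IsSMulRegular (R ⧸ J) e) {p : R[X]} {r : R}
    (h : (C e * X + C k) * p + C r ∈ J.map C) : p ∈ J.map C := by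
  rw [isSMulRegular_quotient_iff_forall_mul_mem] at he
  rw [Ideal.mem_map_C_iff] at h ⊢
  -- Downward induction on `n`, as the coefficient of degree `n + 1` of the product involves
  -- only `e * p.coeff n` and `k * p.coeff (n + 1)`.
  have mem_of_natDegree_lt (m n : ℕ) (hmn : p.natDegree < n + m) : p.coeff n ∈ J := by
    induction m generalizing n with
    | zero => simp [coeff_eq_zero_of_natDegree_lt (by simpa using hmn)]
    | succ m ih =>
      have hn := h (n + 1)
      simp only [add_mul, mul_assoc, coeff_add, coeff_C_mul, coeff_X_mul, coeff_C_succ,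
        add_zero] at hn
      exact he _ ((J.add_mem_iff_left (J.mul_mem_left k (ih (n + 1) (by omega)))).1 hn)
  exact fun n => mem_of_natDegree_lt (p.natDegree + 1) n (by omega)

lemma isSMulRegular_quotient_map_C_linear (he : IsSMulRegular (R ⧸ J) e) (k : R) :
    IsSMulRegular (R[X] ⧸ J.map C) (C e * X + C k) := by
  rw [isSMulRegular_quotient_iff_forall_mul_mem]
  exact fun p hp => mem_map_C_of_linear_mul_add_C_mem (r := 0) he (by simpa using hp)

lemma comap_C_span_linear_sup_map_C (he : IsSMulRegular (R ⧸ J) e) (k : R) :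
    (Ideal.span {C e * X + C k} ⊔ J.map C).comap C = J := by
  refine le_antisymm (fun r hr => ?_) fun r hr =>
    Ideal.mem_sup_right (Ideal.mem_map_of_mem C hr)
  obtain ⟨p, j, hj, hpj⟩ := Ideal.mem_span_singleton_sup.1 hr
  have hp : -p ∈ J.map C := by
    refine mem_map_C_of_linear_mul_add_C_mem (k := k) (r := r) he ?_
    rwa [← hpj, show (C e * X + C k) * -p + (p * (C e * X + C k) + j) = j by ring]
  have hr' : C r ∈ J.map C := hpj ▸ add_mem (Ideal.mul_mem_right _ _ (neg_mem_iff.1 hp)) hj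
  simpa using Ideal.mem_map_C_iff.1 hr' 0

lemma exists_C_pow_mul_eq_linear_mul_add_C (e k : R) (p : R[X]) :
    ∃ (n : ℕ) (q : R[X]) (r : R), C (e ^ n) * p = (C e * X + C k) * q + C r := by
  induction p using Polynomial.induction_on with
  | C a => exact ⟨0, 0, a, by simp⟩
  | add p q hp hq =>
    obtain ⟨n, p', r, hp⟩ := hp
    obtain ⟨m, q', s, hq⟩ := hq
    refine ⟨n + m, C (e ^ m) * p' + C (e ^ n) * q', e ^ m * r + e ^ n * s, ?_⟩
    simp only [pow_add, map_mul, map_add] at hp hq ⊢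
    linear_combination C (e ^ m) * hp + C (e ^ n) * hq
  | monomial m a h =>
    obtain ⟨n, q, r, h⟩ := h
    refine ⟨n + 1, C e * X * q + C r, -(k * r), ?_⟩
    simp only [pow_succ, map_mul, map_neg] at h ⊢
    linear_combination C e * X * h

lemma le_of_comap_C_le {L K : Ideal R[X]} (hL : C e * X + C k ∈ L) (hK : C e * X + C k ∈ K)
    (he : IsSMulRegular (R[X] ⧸ K) (C e)) (hLK : L.comap C ≤ K.comap C) : L ≤ K := by
  intro p hp
  obtain ⟨n, q, r, h⟩ := exists_C_pow_mul_eq_linear_mul_add_C e k p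
  have hr : C r ∈ L := (L.add_mem_iff_right (L.mul_mem_right q hL)).1 (h ▸ L.mul_mem_left _ hp)
  refine isSMulRegular_quotient_iff_forall_mul_mem.1 (he.pow n) p ?_
  rw [← C_pow, h]
  exact K.add_mem (K.mul_mem_right q hK) (hLK hr)

lemma isSMulRegular_quotient_span_linear_leadingCoeff (he : IsSMulRegular (R ⧸ J) e)
    (hk : IsSMulRegular (R ⧸ (Ideal.span {e} ⊔ J)) k) :
    IsSMulRegular (R[X] ⧸ (Ideal.span {C e * X + C k} ⊔ J.map C)) (C e) := by
  refine isSMulRegular_quotient_sup_swap (isSMulRegular_quotient_map_C he) ?_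
  have hk' := isSMulRegular_quotient_map_C hk
  rw [Ideal.map_sup, Ideal.map_span, Set.image_singleton] at hk'
  refine isSMulRegular_quotient_of_sub_mem (Ideal.mem_sup_left ?_) hk'
  simpa using Ideal.mul_mem_right X _ (Ideal.mem_span_singleton_self (C e))

lemma isSMulRegular_quotient_span_linear_C (he : IsSMulRegular (R ⧸ J) e)
    (hk : IsSMulRegular (R ⧸ (Ideal.span {e} ⊔ J)) k) (hh : IsSMulRegular (R ⧸ J) h) :
    IsSMulRegular (R[X] ⧸ (Ideal.span {C e * X + C k} ⊔ J.map C)) (C h) := by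
  set K := Ideal.span {C e * X + C k} ⊔ J.map C with hK
  have hl : C e * X + C k ∈ K := Ideal.mem_sup_left (Ideal.mem_span_singleton_self _)
  rw [isSMulRegular_quotient_iff_forall_mul_mem] at hh ⊢
  suffices hle : Submodule.comap (LinearMap.mulLeft R[X] (C h)) K ≤ K from fun p hp => hle hp
  refine le_of_comap_C_le (K.mul_mem_left _ hl) hl
    (isSMulRegular_quotient_span_linear_leadingCoeff he hk) fun r hr => ?_
  have hhr : h * r ∈ K.comap C := by simpa using hr
  rw [comap_C_span_linear_sup_map_C he] at hhr ⊢
  exact hh r hhr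

end LinearPolynomial

section LinearPair

variable {R : Type*} [CommRing R] {u k r m : R}

lemma C_det_eq (u k r m : R) :
    C (u * m - r * k) = C u * (C r * X + C m) - C r * (C u * X + C k) := by
  simp only [map_sub, map_mul]
  ring

lemma isWeaklyRegular_linear_pair (huk : IsWeaklyRegular R [u, k])
    (hdet : IsSMulRegular R (u * m - r * k)) :
    IsWeaklyRegular R[X] [C u * X + C k, C r * X + C m] := by
  rw [isWeaklyRegular_pair_iff, ← isSMulRegular_quotient_bot_iff] at huk ⊢
  rw [← isSMulRegular_quotient_bot_iff] at hdet
  obtain ⟨hu, hk⟩ := huk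
  have hf := isSMulRegular_quotient_map_C_linear hu k
  rw [Ideal.map_bot] at hf
  refine ⟨hf, ?_⟩
  have hC := isSMulRegular_quotient_span_linear_C hu (by rwa [sup_bot_eq]) hdet
  rw [Ideal.map_bot, sup_bot_eq, C_det_eq] at hC
  refine IsSMulRegular.of_mul (a := C u) ?_
  refine isSMulRegular_quotient_of_sub_mem ?_ hC
  exact Ideal.mem_span_singleton'.2 ⟨C r, by ring⟩

lemma isSMulRegular_quotient_span_linear_pair (huk : IsWeaklyRegular R [u, k])
    (hr : IsSMulRegular (R ⧸ Ideal.span {u, k}) r) :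
    IsSMulRegular (R[X] ⧸ Ideal.span {C u * X + C k, C r * X + C m}) (C u) := by
  rw [isWeaklyRegular_pair_iff, ← isSMulRegular_quotient_bot_iff] at huk
  obtain ⟨hu, hk⟩ := huk
  have hCu := isSMulRegular_quotient_span_linear_leadingCoeff hu (by rwa [sup_bot_eq])
  rw [Ideal.map_bot, sup_bot_eq] at hCu
  have hspan : Ideal.span {C u} ⊔ Ideal.span {C u * X + C k} = (Ideal.span {u, k}).map C := by
    rw [← Ideal.span_insert, Ideal.map_span, Set.image_pair,
      Ideal.span_pair_left_mul_add]
  rw [Ideal.span_pair_comm, Ideal.span_insert]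
  exact isSMulRegular_quotient_sup_swap hCu (hspan ▸ isSMulRegular_quotient_map_C_linear hr m)

lemma le_span_linear_pair (huk : IsWeaklyRegular R [u, k])
    (hr : IsSMulRegular (R ⧸ Ideal.span {u, k}) r) {L : Ideal R[X]}
    (hL : C u * X + C k ∈ L) (hLC : L.comap C ≤ Ideal.span {u * m - r * k}) :
    L ≤ Ideal.span {C u * X + C k, C r * X + C m} := by
  refine le_of_comap_C_le hL (Ideal.subset_span (by simp))
    (isSMulRegular_quotient_span_linear_pair huk hr) (hLC.trans ?_)
  rw [Ideal.span_singleton_le_iff_mem, Ideal.mem_comap, C_det_eq, Ideal.mem_span_pair]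
  exact ⟨-C r, C u, by ring⟩

end LinearPair

section LinearType

open Matrix

variable {R : Type*} [CommRing R]

lemma isSMulRegular_neg_iff {M : Type*} [AddCommGroup M] [Module R M] {r : R} :
    IsSMulRegular M (-r) ↔ IsSMulRegular M r := by
  simp [isSMulRegular_iff_right_eq_zero_of_smul]

lemma eq_zero_of_comp_C_mul_X_eq_zero {c : R} (hc : IsSMulRegular R c) {p : R[X]}
    (hp : p.comp (C c * X) = 0) : p = 0 := by
  ext n
  have hn : p.coeff n * c ^ n = 0 := by simpa using congrArg (coeff · n) hp
  exact (hc.pow n).right_eq_zero_of_smul (by rwa [smul_eq_mul, mul_comm])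

lemma ker_le_span_koszul {b c : R} (hcb : IsWeaklyRegular R [c, b]) {ψ : R[X][X] →+* R[X]}
    (hC : ∀ r, ψ (C (C r)) = C r) (hB : ψ X = C b * X) (hΓ : ψ (C X) = C c * X) :
    RingHom.ker ψ ≤ Ideal.span {C (C c) * X + C (-(C b * X))} := by
  rw [isWeaklyRegular_pair_iff, ← isSMulRegular_quotient_bot_iff] at hcb
  obtain ⟨hc, hb⟩ := hcb
  have hCc := isSMulRegular_quotient_map_C hc
  rw [Ideal.map_bot] at hCc
  have hCb : IsSMulRegular (R[X] ⧸ Ideal.span {C c} ⊔ ⊥) (-(C b * X)) := by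
    rw [sup_bot_eq, isSMulRegular_neg_iff, ← Set.image_singleton, ← Ideal.map_span]
    exact (isSMulRegular_quotient_map_C hb).mul isSMulRegular_quotient_map_C_X
  have hreg := isSMulRegular_quotient_span_linear_leadingCoeff hCc hCb
  rw [Ideal.map_bot, sup_bot_eq] at hreg
  refine le_of_comap_C_le ?_ (Ideal.mem_span_singleton_self _) hreg fun p hp => ?_
  · rw [RingHom.mem_ker, map_add, map_mul, hC, hB, map_neg, map_neg, map_mul, map_mul, hC, hΓ]
    ring
  · have hψ : ψ.comp C = compRingHom (C c * X) := by
      ext r <;> simp [hC, hΓ]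
    have hp0 : p = 0 := eq_zero_of_comp_C_mul_X_eq_zero (isSMulRegular_quotient_bot_iff.1 hc)
      (by rwa [← coe_compRingHom_apply, ← hψ])
    simp [hp0]

section Nested

variable {x y : Fin 3 → R}

lemma span_C_C (r : R) : Ideal.span {C (C r)} = ((Ideal.span {r}).map C).map C := by
  simp [Ideal.map_span]

lemma isWeaklyRegular_nested_pair (hx : IsWeaklyRegular R [x 0, x 1]) :
    IsWeaklyRegular R[X][X] [C (C (x 0)), C (C (x 1)) * X + C (C (x 2) * X)] := by
  rw [isWeaklyRegular_pair_iff, ← isSMulRegular_quotient_bot_iff] at hx ⊢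
  have hu := isSMulRegular_quotient_map_C (isSMulRegular_quotient_map_C hx.1)
  rw [Ideal.map_bot, Ideal.map_bot] at hu
  refine ⟨hu, ?_⟩
  rw [span_C_C]
  exact isSMulRegular_quotient_map_C_linear (isSMulRegular_quotient_map_C hx.2) _

lemma isSMulRegular_quotient_nested_pair (hx : IsWeaklyRegular R [x 0, x 1, x 2])
    (hy : IsSMulRegular (R ⧸ Ideal.span {x 0}) (y 0)) :
    IsSMulRegular (R[X][X] ⧸ Ideal.span {C (C (x 0)), C (C (x 1)) * X + C (C (x 2) * X)})
      (C (C (y 0))) := by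
  rw [isWeaklyRegular_triple_iff, isWeaklyRegular_pair_iff] at hx
  rw [Ideal.span_pair_comm, Ideal.span_insert, span_C_C]
  refine isSMulRegular_quotient_span_linear_C (isSMulRegular_quotient_map_C hx.1.2) ?_
    (isSMulRegular_quotient_map_C hy)
  rw [Ideal.span_pair_comm] at hx
  have hC := (isSMulRegular_quotient_map_C hx.2).mul isSMulRegular_quotient_map_C_X
  rwa [Ideal.span_insert, Ideal.map_sup, Ideal.map_span C {x 1}, Set.image_singleton] at hC

lemma nested_det_eq (x y : Fin 3 → R) :
    C (C (x 0)) * (C (C (y 1)) * X + C (C (y 2) * X)) -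
      C (C (y 0)) * (C (C (x 1)) * X + C (C (x 2) * X)) =
    -(C (C ((y ⨯₃ x) 2)) * X + C (-(C ((y ⨯₃ x) 1) * X))) := by
  simp only [cross_apply, cons_val, map_sub, map_mul, map_neg]
  ring

lemma isSMulRegular_nested_det (hα : IsWeaklyRegular R [(y ⨯₃ x) 2, (y ⨯₃ x) 1]) :
    IsSMulRegular R[X][X] (C (C (x 0)) * (C (C (y 1)) * X + C (C (y 2) * X)) -
      C (C (y 0)) * (C (C (x 1)) * X + C (C (x 2) * X))) := by
  rw [isWeaklyRegular_pair_iff, ← isSMulRegular_quotient_bot_iff] at hα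
  have hc := isSMulRegular_quotient_map_C_linear (isSMulRegular_quotient_map_C hα.1)
    (-(C ((y ⨯₃ x) 1) * X))
  rwa [Ideal.map_bot, Ideal.map_bot, isSMulRegular_quotient_bot_iff, ← isSMulRegular_neg_iff,
    ← nested_det_eq] at hc

lemma isWeaklyRegular_nested_linearForms (hx : IsWeaklyRegular R [x 0, x 1])
    (hα : IsWeaklyRegular R [(y ⨯₃ x) 2, (y ⨯₃ x) 1]) :
    IsWeaklyRegular R[X][X][X]
      [C (C (C (x 0))) * X + C (C (C (x 1)) * X + C (C (x 2) * X)),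
        C (C (C (y 0))) * X + C (C (C (y 1)) * X + C (C (y 2) * X))] :=
  isWeaklyRegular_linear_pair (isWeaklyRegular_nested_pair hx) (isSMulRegular_nested_det hα)

lemma ker_le_span_nested_linearForms (hx : IsWeaklyRegular R [x 0, x 1, x 2])
    (hy : IsSMulRegular (R ⧸ Ideal.span {x 0}) (y 0))
    (hα : IsWeaklyRegular R [(y ⨯₃ x) 2, (y ⨯₃ x) 1]) {Φ : R[X][X][X] →+* R[X]}
    (hC : ∀ r, Φ (C (C (C r))) = C r) (hA : Φ X = C ((y ⨯₃ x) 0) * X)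
    (hB : Φ (C X) = C ((y ⨯₃ x) 1) * X) (hΓ : Φ (C (C X)) = C ((y ⨯₃ x) 2) * X) :
    RingHom.ker Φ ≤ Ideal.span
      {C (C (C (x 0))) * X + C (C (C (x 1)) * X + C (C (x 2) * X)),
        C (C (C (y 0))) * X + C (C (C (y 1)) * X + C (C (y 2) * X))} := by
  refine le_span_linear_pair (isWeaklyRegular_nested_pair (isWeaklyRegular_triple_iff.1 hx).1)
    (isSMulRegular_quotient_nested_pair hx hy) ?_ ?_
  · have hxα := congrArg C (dot_cross_self y x)
    simp only [vec3_dotProduct, map_add, map_mul, map_zero] at hxα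
    simp only [RingHom.mem_ker, map_add, map_mul, hC, hA, hB, hΓ]
    linear_combination X * hxα
  · rw [nested_det_eq, Ideal.span_singleton_neg]
    exact ker_le_span_koszul (ψ := Φ.comp C) hα hC hB hΓ

end Nested

end LinearType

section MvLinearType

open Matrix

variable {R : Type*} [CommRing R] {x y : Fin 3 → R}

/-- Polynomials in three variables as iterated one-variable polynomials, the variable `X 0` being
the outermost one. -/
noncomputable def mvPolynomialFinThreeEquiv (R : Type*) [CommRing R] :
    MvPolynomial (Fin 3) R ≃ₐ[R] R[X][X][X] :=
  (MvPolynomial.finSuccEquiv R 2).trans (mapAlgEquiv ((MvPolynomial.finSuccEquiv R 1).trans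
    (mapAlgEquiv (MvPolynomial.uniqueAlgEquiv R (Fin 1)))))

lemma mvPolynomialFinThreeEquiv_C (r : R) :
    mvPolynomialFinThreeEquiv R (MvPolynomial.C r) = C (C (C r)) :=
  (mvPolynomialFinThreeEquiv R).commutes r

lemma mvPolynomialFinThreeEquiv_X (i : Fin 3) :
    mvPolynomialFinThreeEquiv R (MvPolynomial.X i) = ![X, C X, C (C X)] i := by
  have h₁ : MvPolynomial.finSuccEquiv R 2 (.X 1) = C (.X 0) :=
    MvPolynomial.finSuccEquiv_X_succ (j := 0)
  have h₂ : MvPolynomial.finSuccEquiv R 2 (.X 2) = C (.X 1) :=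
    MvPolynomial.finSuccEquiv_X_succ (j := 1)
  have h₃ : MvPolynomial.finSuccEquiv R 1 (.X 1) = C (.X 0) :=
    MvPolynomial.finSuccEquiv_X_succ (j := 0)
  fin_cases i <;>
    simp [mvPolynomialFinThreeEquiv, h₁, h₂, h₃, MvPolynomial.finSuccEquiv_X_zero]

/-- The linear form with coefficients `x` in three variables. -/
noncomputable def linearForm (x : Fin 3 → R) : MvPolynomial (Fin 3) R :=
  (MvPolynomial.C ∘ x) ⬝ᵥ MvPolynomial.X

lemma mvPolynomialFinThreeEquiv_linearForm (x : Fin 3 → R) :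
    mvPolynomialFinThreeEquiv R (linearForm x) =
      C (C (C (x 0))) * X + C (C (C (x 1)) * X + C (C (x 2) * X)) := by
  simp [linearForm, vec3_dotProduct, mvPolynomialFinThreeEquiv_C, mvPolynomialFinThreeEquiv_X,
    add_assoc]

/-- The presentation `X i ↦ α i * T` of the Rees algebra `R[IT] ⊆ R[T]` of the ideal `I` generated
by the entries of `α`. -/
noncomputable def reesMap (α : Fin 3 → R) : MvPolynomial (Fin 3) R →ₐ[R] R[X] :=
  MvPolynomial.aeval fun i => C (α i) * X

lemma isWeaklyRegular_linearForm (hx : IsWeaklyRegular R [x 0, x 1])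
    (hα : IsWeaklyRegular R [(y ⨯₃ x) 2, (y ⨯₃ x) 1]) :
    IsWeaklyRegular (MvPolynomial (Fin 3) R) [linearForm x, linearForm y] := by
  have h := isWeaklyRegular_nested_linearForms hx hα
  rw [← mvPolynomialFinThreeEquiv_linearForm, ← mvPolynomialFinThreeEquiv_linearForm] at h
  refine ((mvPolynomialFinThreeEquiv R).toAddEquiv.isWeaklyRegular_congr ?_).2 h
  simp

lemma ker_reesMap_le (hx : IsWeaklyRegular R [x 0, x 1, x 2])
    (hy : IsSMulRegular (R ⧸ Ideal.span {x 0}) (y 0))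
    (hα : IsWeaklyRegular R [(y ⨯₃ x) 2, (y ⨯₃ x) 1]) :
    RingHom.ker (reesMap (y ⨯₃ x)) ≤ Ideal.span {linearForm x, linearForm y} := by
  let Φ := (reesMap (y ⨯₃ x)).comp (mvPolynomialFinThreeEquiv R).symm.toAlgHom
  have hΦ (p) : Φ (mvPolynomialFinThreeEquiv R p) = reesMap (y ⨯₃ x) p := by simp [Φ]
  have hX (i) : Φ (![X, C X, C (C X)] i) = C ((y ⨯₃ x) i) * X := by
    rw [← mvPolynomialFinThreeEquiv_X, hΦ, reesMap, MvPolynomial.aeval_X]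
  have hker := ker_le_span_nested_linearForms (Φ := (Φ : R[X][X][X] →+* R[X])) hx hy hα
    (fun r => Φ.commutes r) (hX 0) (hX 1) (hX 2)
  intro p hp
  have hp' := hker ((hΦ p).trans hp)
  rw [← mvPolynomialFinThreeEquiv_linearForm, ← mvPolynomialFinThreeEquiv_linearForm,
    Ideal.mem_span_pair] at hp'
  obtain ⟨a, b, hab⟩ := hp'
  refine Ideal.mem_span_pair.2 ⟨(mvPolynomialFinThreeEquiv R).symm a,
    (mvPolynomialFinThreeEquiv R).symm b, (mvPolynomialFinThreeEquiv R).injective ?_⟩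
  simpa using hab

end MvLinearType

section Koszul

open Matrix

variable {S : Type*} [CommRing S] {x F G P Z : Fin 3 → S}

lemma mem_span_range_iff_exists_dotProduct {ι : Type*} [Fintype ι] {v : ι → S} {r : S} :
    r ∈ Ideal.span (Set.range v) ↔ ∃ w, w ⬝ᵥ v = r :=
  Submodule.mem_span_range_iff_exists_fun S

lemma dotProduct_mem_span_range {ι : Type*} [Fintype ι] (v w : ι → S) :
    v ⬝ᵥ w ∈ Ideal.span (Set.range v) :=
  mem_span_range_iff_exists_dotProduct.2 ⟨w, dotProduct_comm w v⟩

lemma cross_apply_mem_span_range (v w : Fin 3 → S) (i : Fin 3) :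
    (v ⨯₃ w) i ∈ Ideal.span (Set.range v) := by
  rw [← single_one_dotProduct i (v ⨯₃ w), triple_product_permutation]
  exact dotProduct_mem_span_range v _

lemma exists_eq_smul_add_smul {ι : Type*} {f g : S} {P : ι → S}
    (h : ∀ i, P i ∈ Ideal.span {f, g}) : ∃ U V : ι → S, P = f • U + g • V := by
  simp only [Ideal.mem_span_pair] at h
  choose U V hUV using h
  exact ⟨U, V, funext fun i => by simp [← hUV i, mul_comm]⟩

lemma exists_eq_cross_of_dotProduct_eq_zero (hx : IsWeaklyRegular S [x 0, x 1, x 2])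
    (h : x ⬝ᵥ P = 0) : ∃ m, P = x ⨯₃ m := by
  simp only [isWeaklyRegular_triple_iff, isWeaklyRegular_pair_iff,
    isSMulRegular_quotient_iff_forall_mul_mem] at hx
  obtain ⟨⟨hx₀, hx₁⟩, hx₂⟩ := hx
  rw [vec3_dotProduct] at h
  obtain ⟨a, b, h₂⟩ := Ideal.mem_span_pair.1 (hx₂ (P 2) (Ideal.mem_span_pair.2
    ⟨-P 0, -P 1, by linear_combination -h⟩))
  obtain ⟨c, h₁⟩ := Ideal.mem_span_singleton'.1 (hx₁ (P 1 + b * x 2)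
    (Ideal.mem_span_singleton'.2 ⟨-(P 0 + a * x 2), by linear_combination -h - x 2 * h₂⟩))
  have h₀ : P 0 + a * x 2 + c * x 1 = 0 := hx₀.right_eq_zero_of_smul (by
    rw [smul_eq_mul]
    linear_combination h + x 2 * h₂ + x 1 * h₁)
  refine ⟨![-b, a, -c], ?_⟩
  ext i
  fin_cases i <;> simp only [Fin.zero_eta, Fin.mk_one, Fin.reduceFinMk, cross_apply, cons_val]
  · linear_combination h₀
  · linear_combination -h₁
  · linear_combination -h₂

lemma exists_eq_smul_of_cross_eq_zero (hx : IsWeaklyRegular S [x 0, x 1]) (h : x ⨯₃ P = 0) :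
    ∃ m : S, P = m • x := by
  simp only [isWeaklyRegular_pair_iff, isSMulRegular_quotient_iff_forall_mul_mem] at hx
  obtain ⟨hx₀, hx₁⟩ := hx
  have h₁ : x 2 * P 0 - x 0 * P 2 = 0 := congrFun h 1
  have h₂ : x 0 * P 1 - x 1 * P 0 = 0 := congrFun h 2
  obtain ⟨m, hm⟩ := Ideal.mem_span_singleton'.1 (hx₁ (P 0)
    (Ideal.mem_span_singleton'.2 ⟨P 1, by linear_combination h₂⟩))
  have cancel {r s : S} (hrs : x 0 * (r - s) = 0) : r = s :=
    sub_eq_zero.1 (hx₀.right_eq_zero_of_smul hrs)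
  refine ⟨m, ?_⟩
  ext i
  fin_cases i
  · exact hm.symm
  · exact cancel (by
      simp only [Fin.mk_one, Pi.smul_apply, smul_eq_mul]
      linear_combination h₂ - x 1 * hm)
  · exact cancel (by
      simp only [Fin.reduceFinMk, Pi.smul_apply, smul_eq_mul]
      linear_combination -h₁ - x 2 * hm)

lemma exists_eq_mul_of_mul_add_mul_eq_zero {f g p q : S} (hfg : IsWeaklyRegular S [f, g])
    (h : f * p + g * q = 0) : ∃ n, p = g * n ∧ q = -(f * n) := by
  simp only [isWeaklyRegular_pair_iff, isSMulRegular_quotient_iff_forall_mul_mem] at hfg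
  obtain ⟨n, hn⟩ := Ideal.mem_span_singleton'.1 (hfg.2 q
    (Ideal.mem_span_singleton'.2 ⟨-p, by linear_combination -h⟩))
  have hp : p + g * n = 0 := hfg.1.right_eq_zero_of_smul (by
    rw [smul_eq_mul]
    linear_combination h + g * hn)
  exact ⟨-n, by linear_combination hp, by linear_combination -hn⟩

lemma cross_cross_eq_dotProduct_smul_sub (x F G : Fin 3 → S) :
    x ⨯₃ (F ⨯₃ G) = (x ⬝ᵥ G) • F - (x ⬝ᵥ F) • G := by
  rw [cross_cross_eq_smul_sub_smul', dotProduct_comm F x]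

lemma exists_sub_mem_of_cross_mem (hx : IsWeaklyRegular S [x 0, x 1, x 2])
    (hfg : IsWeaklyRegular S [x ⬝ᵥ F, x ⬝ᵥ G])
    (h : ∀ i, (x ⨯₃ P) i ∈ Ideal.span {x ⬝ᵥ F, x ⬝ᵥ G}) :
    ∃ n p : S, ∀ i, P i - (p * x i - n * (F ⨯₃ G) i) ∈ Ideal.span {x ⬝ᵥ F, x ⬝ᵥ G} := by
  obtain ⟨U, V, hUV⟩ := exists_eq_smul_add_smul h
  have hdot := congrArg (x ⬝ᵥ ·) hUV
  simp only [dot_self_cross, dotProduct_add, dotProduct_smul, smul_eq_mul] at hdot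
  obtain ⟨n, hU, hV⟩ := exists_eq_mul_of_mul_add_mul_eq_zero hfg hdot.symm
  obtain ⟨U', hU'⟩ := exists_eq_cross_of_dotProduct_eq_zero (P := U - n • G) hx (by
    simp [dotProduct_sub, hU, mul_comm])
  obtain ⟨V', hV'⟩ := exists_eq_cross_of_dotProduct_eq_zero (P := V + n • F) hx (by
    simp [dotProduct_add, hV, mul_comm])
  obtain ⟨p, hp⟩ := exists_eq_smul_of_cross_eq_zero
    (P := P + n • (F ⨯₃ G) - (x ⬝ᵥ F) • U' - (x ⬝ᵥ G) • V') (isWeaklyRegular_triple_iff.1 hx).1 (by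
      rw [map_sub, map_sub, map_add, map_smul, map_smul, map_smul, hUV, ← hU', ← hV',
        cross_cross_eq_dotProduct_smul_sub]
      module)
  refine ⟨n, p, fun i => Ideal.mem_span_pair.2 ⟨U' i, V' i, ?_⟩⟩
  have hpi := congrFun hp i
  simp only [Pi.sub_apply, Pi.add_apply, Pi.smul_apply, smul_eq_mul] at hpi
  linear_combination -hpi

lemma mul_mem_span_of_mul_cross_sub_mem (hfg : IsWeaklyRegular S [x ⬝ᵥ F, x ⬝ᵥ G]) {n p : S}
    (h : ∀ i, n * (F ⨯₃ G) i - p * x i ∈ Ideal.span {x ⬝ᵥ F, x ⬝ᵥ G}) (i : Fin 3) :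
    n * F i ∈ Ideal.span (Set.range x) := by
  obtain ⟨U, V, hUV⟩ := exists_eq_smul_add_smul (P := n • (F ⨯₃ G) - p • x) h
  have hcross := congrArg (x ⨯₃ ·) hUV
  simp only [map_sub, map_add, map_smul, cross_self, cross_cross_eq_dotProduct_smul_sub] at hcross
  have hi := congrFun hcross i
  simp only [Pi.sub_apply, Pi.add_apply, Pi.smul_apply, smul_eq_mul, Pi.zero_apply] at hi
  obtain ⟨N, -, hN⟩ := exists_eq_mul_of_mul_add_mul_eq_zero
    (p := n * G i + (x ⨯₃ U) i) (q := (x ⨯₃ V) i - n * F i) hfg (by linear_combination -hi)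
  rw [show n * F i = (x ⨯₃ V) i + (x ⬝ᵥ F) * N by linear_combination -hN]
  exact add_mem (cross_apply_mem_span_range x V i)
    (Ideal.mul_mem_right _ _ (dotProduct_mem_span_range x F))

lemma dotProduct_mem_span_of_cross_add_cross_mem (hfg : IsWeaklyRegular S [x ⬝ᵥ F, x ⬝ᵥ G])
    (h : ∀ i, ((F ⨯₃ G) ⨯₃ Z + x ⨯₃ P) i ∈ Ideal.span {x ⬝ᵥ F, x ⬝ᵥ G}) :
    Z ⬝ᵥ F ∈ Ideal.span (Set.range x) := by
  obtain ⟨U, V, hUV⟩ := exists_eq_smul_add_smul h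
  have hdot := congrArg (x ⬝ᵥ ·) hUV
  have htriple : x ⬝ᵥ (F ⨯₃ G) ⨯₃ Z = (x ⬝ᵥ G) * (Z ⬝ᵥ F) - (x ⬝ᵥ F) * (Z ⬝ᵥ G) := by
    rw [triple_product_permutation, triple_product_permutation,
      cross_cross_eq_dotProduct_smul_sub, dotProduct_sub, dotProduct_smul, dotProduct_smul]
    rfl
  simp only [dotProduct_add, dot_self_cross, dotProduct_smul, smul_eq_mul, htriple] at hdot
  obtain ⟨N, -, hN⟩ := exists_eq_mul_of_mul_add_mul_eq_zero
    (p := -(Z ⬝ᵥ G) - x ⬝ᵥ U) (q := Z ⬝ᵥ F - x ⬝ᵥ V) hfg (by linear_combination hdot)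
  rw [show Z ⬝ᵥ F = x ⬝ᵥ V - (x ⬝ᵥ F) * N by linear_combination hN]
  exact sub_mem (dotProduct_mem_span_range x V)
    (Ideal.mul_mem_right _ _ (dotProduct_mem_span_range x F))

section Hom

variable {B : Type*} [CommRing B] {φ : S →+* B} {D p : B}

lemma ringHom_comp_cross (φ : S →+* B) (v w : Fin 3 → S) :
    φ ∘ (v ⨯₃ w) = (φ ∘ v) ⨯₃ (φ ∘ w) := by
  ext i
  fin_cases i <;> simp [cross_apply]

lemma exists_eq_sub_mul_of_mul_mem_range (hx : IsWeaklyRegular S [x 0, x 1, x 2])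
    (hfg : IsWeaklyRegular S [x ⬝ᵥ F, x ⬝ᵥ G])
    (hφ : RingHom.ker φ = Ideal.span {x ⬝ᵥ F, x ⬝ᵥ G})
    (hφx : IsSMulRegular B (φ (x 0))) (hD : φ ∘ (F ⨯₃ G) = D • φ ∘ x)
    (h : ∀ i, φ (x i) * p ∈ φ.range) : ∃ q n, p = φ q - φ n * D := by
  choose P hP using h
  obtain ⟨n, q, hnq⟩ := exists_sub_mem_of_cross_mem (P := P) hx hfg fun i => by
    have hP' : φ ∘ P = p • φ ∘ x := funext fun i => by simp [hP, mul_comm]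
    rw [← hφ, RingHom.mem_ker, ← Function.comp_apply (f := φ), ringHom_comp_cross, hP', map_smul,
      cross_self, smul_zero, Pi.zero_apply]
  have h₀ := hnq 0
  have hD₀ : φ ((F ⨯₃ G) 0) = D * φ (x 0) := congrFun hD 0
  rw [← hφ, RingHom.mem_ker, map_sub, hP, map_sub, map_mul, map_mul, hD₀] at h₀
  refine ⟨q, n, sub_eq_zero.1 (hφx.right_eq_zero_of_smul ?_)⟩
  rw [smul_eq_mul]
  linear_combination h₀

lemma mul_mem_span_of_map_mul_mem_range (hfg : IsWeaklyRegular S [x ⬝ᵥ F, x ⬝ᵥ G])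
    (hφ : RingHom.ker φ = Ideal.span {x ⬝ᵥ F, x ⬝ᵥ G}) (hD : φ ∘ (F ⨯₃ G) = D • φ ∘ x) {n : S}
    (h : φ n * D ∈ φ.range) (i : Fin 3) : n * F i ∈ Ideal.span (Set.range x) := by
  obtain ⟨q, hq⟩ := h
  refine mul_mem_span_of_mul_cross_sub_mem (p := q) hfg (fun i => ?_) i
  have hDi : φ ((F ⨯₃ G) i) = D * φ (x i) := congrFun hD i
  rw [← hφ, RingHom.mem_ker, map_sub, map_mul, map_mul, hDi, hq]
  ring

lemma dotProduct_mem_span_of_mul_sub_mem_range (hfg : IsWeaklyRegular S [x ⬝ᵥ F, x ⬝ᵥ G])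
    (hφ : RingHom.ker φ = Ideal.span {x ⬝ᵥ F, x ⬝ᵥ G}) (hD : φ ∘ (F ⨯₃ G) = D • φ ∘ x)
    (h : ∀ i, φ (x i) * p - φ (Z i) * D ∈ φ.range) : Z ⬝ᵥ F ∈ Ideal.span (Set.range x) := by
  choose P hP using h
  refine dotProduct_mem_span_of_cross_add_cross_mem (P := P) hfg fun i => ?_
  have hP' : φ ∘ P = p • φ ∘ x - D • φ ∘ Z := funext fun i => by simp [hP, mul_comm]
  rw [← hφ, RingHom.mem_ker, Pi.add_apply, map_add, ← Function.comp_apply (f := φ),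
    ← Function.comp_apply (f := φ), ringHom_comp_cross φ (F ⨯₃ G), ringHom_comp_cross φ x, hD, hP']
  simp

lemma exists_mul_sub_mem_range (hx : IsWeaklyRegular S [x 0, x 1, x 2])
    (hφx : IsWeaklyRegular B [φ (x 0), φ (x 1)]) (hf : φ (x ⬝ᵥ F) = 0)
    (hG : ∀ i, G i ∈ Ideal.span (Set.range x)) (hD : φ ∘ (F ⨯₃ G) = D • φ ∘ x)
    (s : Fin 3 → S) : ∃ p, ∀ i, φ (x i) * p - φ ((s ⨯₃ F) i) * D ∈ φ.range := by
  have hM : F ⨯₃ G ⬝ᵥ s ∈ Ideal.span (Set.range x) := by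
    rw [dotProduct_comm, triple_product_permutation, triple_product_permutation]
    exact sum_mem fun i _ => Ideal.mul_mem_right _ _ (hG i)
  obtain ⟨W, hW⟩ := mem_span_range_iff_exists_dotProduct.1 hM
  obtain ⟨P, hP⟩ := exists_eq_cross_of_dotProduct_eq_zero
    (P := (F ⨯₃ G ⬝ᵥ s) • F - (x ⬝ᵥ F) • W) hx (by
      simp only [dotProduct_sub, dotProduct_smul, smul_eq_mul, dotProduct_comm x W, hW]
      ring)
  obtain ⟨p, hp⟩ := exists_eq_smul_of_cross_eq_zero
    (x := φ ∘ x) (P := D • (φ ∘ (s ⨯₃ F)) + φ ∘ P) hφx (by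
      have hφM : φ (F ⨯₃ G ⬝ᵥ s) = D * φ (x ⬝ᵥ s) := by
        rw [RingHom.map_dotProduct, hD, smul_dotProduct, smul_eq_mul, RingHom.map_dotProduct]
      have hφF : φ ∘ ((F ⨯₃ G ⬝ᵥ s) • F - (x ⬝ᵥ F) • W) = (D * φ (x ⬝ᵥ s)) • (φ ∘ F) :=
        funext fun i => by simp [hφM, hf]
      rw [map_add, ← ringHom_comp_cross φ x P, ← hP, hφF, map_smul, ringHom_comp_cross,
        cross_cross_eq_dotProduct_smul_sub, ← RingHom.map_dotProduct, ← RingHom.map_dotProduct, hf]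
      module)
  refine ⟨p, fun i => ⟨P i, ?_⟩⟩
  have hpi := congrFun hp i
  simp only [Pi.add_apply, Pi.smul_apply, smul_eq_mul, Function.comp_apply] at hpi
  linear_combination hpi

end Hom

end Koszul

section ReesKoszul

open Matrix

variable {R : Type*} [CommRing R] {x y α : Fin 3 → R}

lemma range_reesMap (α : Fin 3 → R) :
    (reesMap α).range = reesAlgebra (Ideal.span (Set.range α)) := by
  have hadj := adjoin_monomial_eq_reesAlgebra (Ideal.span (Set.range α))
  rw [← Ideal.submodule_span_eq, Submodule.map_span, Algebra.adjoin_span, ← Set.range_comp] at hadj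
  rw [← Ideal.submodule_span_eq, ← hadj, Algebra.adjoin_range_eq_range_aeval]
  simp only [reesMap, ← C_mul_X_eq_monomial, Function.comp_def]

lemma mem_range_reesMap_iff {p : R[X]} :
    p ∈ (reesMap α : MvPolynomial (Fin 3) R →+* R[X]).range ↔
      ∀ n, p.coeff n ∈ Ideal.span (Set.range α) ^ n := by
  rw [← mem_reesAlgebra_iff, ← range_reesMap]
  rfl

lemma C_mul_X_pow_mem_range_reesMap_iff {r : R} {n : ℕ} :
    C r * X ^ n ∈ (reesMap α : MvPolynomial (Fin 3) R →+* R[X]).range ↔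
      r ∈ Ideal.span (Set.range α) ^ n := by
  rw [mem_range_reesMap_iff]
  refine ⟨fun h => by simpa using h n, fun h m => ?_⟩
  rw [coeff_C_mul_X_pow]
  split_ifs with hmn
  · exact hmn ▸ h
  · exact zero_mem _

lemma coeff_reesMap_mem (α : Fin 3 → R) (p : MvPolynomial (Fin 3) R) (n : ℕ) :
    (reesMap α p).coeff n ∈ Ideal.span (Set.range α) ^ n :=
  mem_range_reesMap_iff.1 ⟨p, rfl⟩ n

lemma reesMap_linearForm (α s : Fin 3 → R) : reesMap α (linearForm s) = C (s ⬝ᵥ α) * X := by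
  simp only [linearForm, dotProduct, reesMap, map_sum, map_mul, Function.comp_apply,
    MvPolynomial.aeval_X, Finset.sum_mul, mul_assoc]
  simp

lemma reesMap_C_cross_X (α s : Fin 3 → R) (i : Fin 3) :
    reesMap α (((MvPolynomial.C ∘ s) ⨯₃ MvPolynomial.X) i) = C ((s ⨯₃ α) i) * X := by
  fin_cases i <;> simp [cross_apply, reesMap] <;> ring

lemma eval_linearForm (s p : Fin 3 → R) : MvPolynomial.eval p (linearForm s) = s ⬝ᵥ p := by
  simp [linearForm, dotProduct]

lemma linearForm_vecMul (x : Fin 3 → R) (q : Matrix (Fin 3) (Fin 3) R) :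
    linearForm (x ᵥ* q) =
      (MvPolynomial.C ∘ x) ⬝ᵥ (q.map MvPolynomial.C *ᵥ MvPolynomial.X) := by
  rw [dotProduct_mulVec, linearForm]
  congr 1
  ext1 j
  simp [vecMul, dotProduct]

lemma eval_mem_of_mem_span_C {p : MvPolynomial (Fin 3) R}
    (hp : p ∈ Ideal.span (Set.range (MvPolynomial.C ∘ x))) (a : Fin 3 → R) :
    MvPolynomial.eval a p ∈ Ideal.span (Set.range x) := by
  have hmem := Ideal.mem_map_of_mem (MvPolynomial.eval a) hp
  rwa [Ideal.map_span, ← Set.range_comp, ← Function.comp_assoc,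
    show MvPolynomial.eval a ∘ MvPolynomial.C = id from funext MvPolynomial.eval_C] at hmem

/-- `IsReesKoszul x α G d`: the Rees algebra of the ideal generated by `α` is presented by the
linear forms `x ⬝ᵥ X` and `x ⬝ᵥ G`, which form a regular sequence, the entries of `G` have
coefficients in the ideal generated by the regular sequence `x`, and `X ⨯₃ G` becomes the multiple
`d * T ^ 2` of `x` in the Rees algebra. -/
structure IsReesKoszul (x α : Fin 3 → R) (G : Fin 3 → MvPolynomial (Fin 3) R) (d : R) : Prop where
  weaklyRegular : IsWeaklyRegular R [x 0, x 1, x 2]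
  weaklyRegular_dotProduct : IsWeaklyRegular (MvPolynomial (Fin 3) R)
    [(MvPolynomial.C ∘ x) ⬝ᵥ MvPolynomial.X, (MvPolynomial.C ∘ x) ⬝ᵥ G]
  ker_reesMap : RingHom.ker (reesMap α : MvPolynomial (Fin 3) R →+* R[X]) =
    Ideal.span {(MvPolynomial.C ∘ x) ⬝ᵥ MvPolynomial.X, (MvPolynomial.C ∘ x) ⬝ᵥ G}
  mem_span : ∀ i, G i ∈ Ideal.span (Set.range (MvPolynomial.C ∘ x))
  reesMap_cross : reesMap α ∘ (MvPolynomial.X ⨯₃ G) =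
    (C d * X ^ 2) • (reesMap α ∘ MvPolynomial.C ∘ x)

namespace IsReesKoszul

variable {G : Fin 3 → MvPolynomial (Fin 3) R} {d ξ : R}

lemma weaklyRegular_C (h : IsReesKoszul x α G d) :
    IsWeaklyRegular (MvPolynomial (Fin 3) R)
      [MvPolynomial.C (σ := Fin 3) (x 0), MvPolynomial.C (x 1), MvPolynomial.C (x 2)] :=
  h.weaklyRegular.of_flat (S := MvPolynomial (Fin 3) R)

lemma weaklyRegular_reesMap_C (h : IsReesKoszul x α G d) :
    IsWeaklyRegular R[X]
      [reesMap α (MvPolynomial.C (x 0)), reesMap α (MvPolynomial.C (x 1))] := by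
  have hC (i) : reesMap α (MvPolynomial.C (x i)) = algebraMap R R[X] (x i) :=
    (reesMap α).commutes _
  rw [hC, hC]
  exact (isWeaklyRegular_triple_iff.1 h.weaklyRegular).1.of_flat

lemma mul_mem_pow_two (h : IsReesKoszul x α G d) (i : Fin 3) :
    x i * d ∈ Ideal.span (Set.range α) ^ 2 := by
  rw [← C_mul_X_pow_mem_range_reesMap_iff]
  refine ⟨(MvPolynomial.X ⨯₃ G) i, (congrFun h.reesMap_cross i).trans ?_⟩
  simp only [Pi.smul_apply, Function.comp_apply, MvPolynomial.algHom_C, algebraMap_eq, smul_eq_mul,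
    map_mul]
  ring

lemma exists_sub_mul_mem_pow_three (h : IsReesKoszul x α G d)
    (hξ : ∀ i, x i * ξ ∈ Ideal.span (Set.range α) ^ 3) :
    ∃ η ∈ Ideal.span (Set.range α), ξ - d * η ∈ Ideal.span (Set.range α) ^ 3 := by
  obtain ⟨q, n, hqn⟩ := exists_eq_sub_mul_of_mul_mem_range (p := C ξ * X ^ 3) h.weaklyRegular_C
    h.weaklyRegular_dotProduct h.ker_reesMap
    (isWeaklyRegular_pair_iff.1 h.weaklyRegular_reesMap_C).1 h.reesMap_cross fun i => by
      simpa [mul_assoc] using C_mul_X_pow_mem_range_reesMap_iff.2 (hξ i)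
  refine ⟨-(reesMap α n).coeff 1, neg_mem ?_, ?_⟩
  · simpa using coeff_reesMap_mem α n 1
  · have hcoeff := congrArg (coeff · 3) hqn
    simp only [coeff_mul_X_pow', le_refl, ↓reduceIte, tsub_self, coeff_C_zero, RingHom.coe_coe,
      ← mul_assoc, coeff_sub, Nat.reduceLeDiff, Nat.reduceSub, coeff_mul_C] at hcoeff
    rw [show ξ - d * -(reesMap α n).coeff 1 = (reesMap α q).coeff 3 by linear_combination hcoeff]
    exact coeff_reesMap_mem α q 3

lemma mem_span_of_mul_dotProduct_mem (h : IsReesKoszul x α G d) {s : Fin 3 → R}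
    (hs : d * (s ⬝ᵥ α) ∈ Ideal.span (Set.range α) ^ 3) (i : Fin 3) :
    s i ∈ Ideal.span (Set.range x) := by
  have hmem := mul_mem_span_of_map_mul_mem_range (n := linearForm s) h.weaklyRegular_dotProduct
    h.ker_reesMap h.reesMap_cross (by
      convert C_mul_X_pow_mem_range_reesMap_iff.2 hs using 1
      simp only [RingHom.coe_coe, reesMap_linearForm, map_mul]
      ring) i
  simpa [eval_linearForm] using eval_mem_of_mem_span_C hmem (Pi.single i 1)

lemma dotProduct_mulVec_mem_span (h : IsReesKoszul x α G d) {z : Matrix (Fin 3) (Fin 3) R}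
    (hz : ∀ i, x i * ξ - d * (z *ᵥ α) i ∈ Ideal.span (Set.range α) ^ 3) (a : Fin 3 → R) :
    a ⬝ᵥ z *ᵥ a ∈ Ideal.span (Set.range x) := by
  have hmem := dotProduct_mem_span_of_mul_sub_mem_range (p := C ξ * X ^ 3)
    (Z := fun i => linearForm (z i)) h.weaklyRegular_dotProduct
    h.ker_reesMap h.reesMap_cross fun i => by
      convert C_mul_X_pow_mem_range_reesMap_iff.2 (hz i) using 1
      simp only [Function.comp_apply, RingHom.coe_coe, MvPolynomial.algHom_C, algebraMap_eq,
        reesMap_linearForm, mulVec, map_sub, map_mul]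
      ring
  have heval := eval_mem_of_mem_span_C hmem a
  have hX : MvPolynomial.eval a ∘ MvPolynomial.X = a := funext fun i => MvPolynomial.eval_X i
  have hz : MvPolynomial.eval a ∘ (fun i => linearForm (z i)) = z *ᵥ a :=
    funext fun i => eval_linearForm (z i) a
  rwa [RingHom.map_dotProduct, dotProduct_comm, hX, hz] at heval

lemma exists_mul_sub_mul_cross_mem (h : IsReesKoszul x α G d) (s : Fin 3 → R) :
    ∃ ξ, ∀ i, x i * ξ - d * (s ⨯₃ α) i ∈ Ideal.span (Set.range α) ^ 3 := by
  let φ : MvPolynomial (Fin 3) R →+* R[X] := reesMap α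
  have hφ : φ ((MvPolynomial.C ∘ x) ⬝ᵥ MvPolynomial.X) = 0 := by
    rw [← RingHom.mem_ker, h.ker_reesMap]
    exact Ideal.subset_span (by simp)
  have hD : φ ∘ (MvPolynomial.X ⨯₃ G) = (C d * X ^ 2) • (φ ∘ MvPolynomial.C ∘ x) :=
    h.reesMap_cross
  obtain ⟨p, hp⟩ := exists_mul_sub_mem_range h.weaklyRegular_C h.weaklyRegular_reesMap_C
    hφ h.mem_span hD (MvPolynomial.C ∘ s)
  refine ⟨p.coeff 3, fun i => ?_⟩
  have hcoeff := mem_range_reesMap_iff.1 (hp i) 3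
  have hprod : φ (((MvPolynomial.C ∘ s) ⨯₃ MvPolynomial.X) i) * (C d * X ^ 2) =
      C (d * (s ⨯₃ α) i) * X ^ 3 := by
    rw [RingHom.coe_coe, reesMap_C_cross_X, C_mul]
    ring
  have hx : φ ((MvPolynomial.C ∘ x) i) = C (x i) := (reesMap α).commutes (x i)
  rwa [hprod, hx, coeff_sub, coeff_C_mul, coeff_C_mul_X_pow, if_pos rfl] at hcoeff

end IsReesKoszul

end ReesKoszul

section SystemOfParameters

variable {R : Type*} [CommRing R]

lemma radical_eq_radical_of_le_of_le_radical {J K : Ideal R} (hKJ : K ≤ J) (hJK : J ≤ K.radical) :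
    K.radical = J.radical :=
  le_antisymm (Ideal.radical_mono hKJ) (Ideal.radical_le_radical_iff.2 hJK)

lemma span_triple_le_iff {J : Ideal R} {r s t : R} :
    Ideal.span {r, s, t} ≤ J ↔ r ∈ J ∧ s ∈ J ∧ t ∈ J := by
  simp [Ideal.span_le, Set.insert_subset_iff]

lemma mem_span_triple (r s t : R) :
    r ∈ Ideal.span {r, s, t} ∧ s ∈ Ideal.span {r, s, t} ∧ t ∈ Ideal.span {r, s, t} :=
  span_triple_le_iff.1 le_rfl

lemma radical_span_pow_triple (x y z : R) {m n : ℕ} (hm : 0 < m) (hn : 0 < n) :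
    (Ideal.span {x, y ^ m, z ^ n}).radical = (Ideal.span {x, y, z}).radical := by
  obtain ⟨hx, hy, hz⟩ := mem_span_triple x y z
  obtain ⟨hx', hy', hz'⟩ := mem_span_triple x (y ^ m) (z ^ n)
  exact radical_eq_radical_of_le_of_le_radical
    (span_triple_le_iff.2 ⟨hx, Ideal.pow_mem_of_mem _ hy m hm, Ideal.pow_mem_of_mem _ hz n hn⟩)
    (span_triple_le_iff.2 ⟨Ideal.le_radical hx', ⟨m, hy'⟩, ⟨n, hz'⟩⟩)

lemma radical_span_minors (x y z : R) {k l m n p : ℕ} (hk : 0 < k) (hm : 0 < m) (hp : 0 < p)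
    (hmn : m ≤ n) :
    (Ideal.span {y ^ k - x * z ^ n, x ^ p - y ^ l * z ^ m, z ^ m}).radical =
      (Ideal.span {x, y, z}).radical := by
  obtain ⟨hx, hy, hz⟩ := mem_span_triple x y z
  obtain ⟨hc, hb, hz'⟩ := mem_span_triple (y ^ k - x * z ^ n) (x ^ p - y ^ l * z ^ m) (z ^ m)
  refine radical_eq_radical_of_le_of_le_radical (span_triple_le_iff.2 ⟨?_, ?_, ?_⟩)
    (span_triple_le_iff.2 ⟨⟨p, ?_⟩, ⟨k, ?_⟩, ⟨m, hz'⟩⟩)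
  · exact sub_mem (Ideal.pow_mem_of_mem _ hy k hk) (Ideal.mul_mem_right _ _ hx)
  · exact sub_mem (Ideal.pow_mem_of_mem _ hx p hp)
      (Ideal.mul_mem_left _ _ (Ideal.pow_mem_of_mem _ hz m hm))
  · exact Ideal.pow_mem_of_mem _ hz m hm
  · exact (Submodule.sub_mem_iff_left _ (Ideal.mul_mem_left _ _ hz')).1 hb
  · exact (Submodule.sub_mem_iff_left _ (Ideal.mul_mem_left _ _
      (Ideal.mem_of_dvd _ (pow_dvd_pow z hmn) hz'))).1 hc

lemma range_vec3 {S : Type*} (r s t : S) : Set.range ![r, s, t] = {r, s, t} := by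
  simp only [Matrix.range_cons, Matrix.range_empty, Set.union_empty, Set.singleton_union]

lemma pow_mem_pow_of_mul_le {J : Ideal R} {r : R} {k m n : ℕ} (hr : r ^ m ∈ J) (hn : m * k ≤ n) :
    r ^ n ∈ J ^ k :=
  Ideal.mem_of_dvd _ (pow_dvd_pow r hn) (pow_mul r m k ▸ Ideal.pow_mem_pow hr k)

end SystemOfParameters

section ColonLayer

open Matrix

variable {R : Type*} [CommRing R]

lemma nonempty_quotient_equiv_pi {M ι : Type*} [AddCommGroup M] [Module R M] [Fintype ι]
    {K₁ K₂ : Submodule R M} {Q : Ideal R} {g : ι → M} (hg : ∀ i, g i ∈ K₂)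
    (hker : ∀ s : ι → R, ∑ i, s i • g i ∈ K₁ ↔ ∀ i, s i ∈ Q)
    (hsurj : ∀ m ∈ K₂, ∃ s : ι → R, m - ∑ i, s i • g i ∈ K₁) :
    Nonempty ((K₂ ⧸ K₁.comap K₂.subtype) ≃ₗ[R] (ι → R ⧸ Q)) := by
  classical
  let L : (ι → R) →ₗ[R] K₂ := Fintype.linearCombination R fun i => ⟨g i, hg i⟩
  have hL (s) : (L s : M) = ∑ i, s i • g i := by simp [L, Fintype.linearCombination_apply]
  have hsurjL : Function.Surjective ((K₁.comap K₂.subtype).mkQ ∘ₗ L) := by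
    intro m
    obtain ⟨⟨m, hm⟩, rfl⟩ := Submodule.mkQ_surjective _ m
    obtain ⟨s, hs⟩ := hsurj m hm
    refine ⟨s, ((Submodule.Quotient.eq _).2 ?_).symm⟩
    simpa [hL] using hs
  have hkerL : LinearMap.ker ((K₁.comap K₂.subtype).mkQ ∘ₗ L) =
      Submodule.pi Set.univ fun _ => Q := by
    ext s
    simp [hL, hker]
  exact ⟨(LinearMap.quotKerEquivOfSurjective _ hsurjL).symm ≪≫ₗ
    Submodule.quotEquivOfEq _ _ hkerL ≪≫ₗ Submodule.quotientPi _⟩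

lemma colon_mul (J A B : Ideal R) :
    Submodule.colon J ((A * B : Ideal R) : Set R) =
      Submodule.colon (Submodule.colon J (B : Set R)) (A : Set R) := by
  ext r
  have hmul : (∀ s ∈ A * B, r * s ∈ J) ↔ A * B ≤ Submodule.colon J {r} := by
    simp [SetLike.le_def, mul_comm]
  simp only [Submodule.mem_colon, SetLike.mem_coe, smul_eq_mul, hmul, Ideal.mul_le,
    Set.mem_singleton_iff, forall_eq]
  simp only [mul_comm, mul_left_comm]

lemma mem_colon_span_range_iff {ι : Type*} {J : Ideal R} {v : ι → R} {r : R} :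
    r ∈ Submodule.colon J (Ideal.span (Set.range v) : Set R) ↔ ∀ i, v i * r ∈ J := by
  simp [Submodule.mem_colon, mul_comm r]

lemma exists_mulVec_sub_cross_mem {J : Ideal R} {z : Matrix (Fin 3) (Fin 3) R}
    (hz : ∀ a, a ⬝ᵥ z *ᵥ a ∈ J) :
    ∃ s, ∀ v i, (z *ᵥ v - s ⨯₃ v) i ∈ J * Ideal.span (Set.range v) := by
  have hdiag (i) : z i i ∈ J := by simpa using hz (Pi.single i 1)
  have hskew (i j) : z i j + z j i ∈ J := by
    have hij := hz (Pi.single i 1 + Pi.single j 1)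
    simp only [mulVec_add, dotProduct_add, add_dotProduct, mulVec_single_one,
      single_one_dotProduct, col_apply] at hij
    convert sub_mem (sub_mem hij (hdiag i)) (hdiag j) using 1
    ring
  refine ⟨![z 2 1, z 0 2, z 1 0], fun v i => ?_⟩
  have hv (i) : v i ∈ Ideal.span (Set.range v) := Ideal.subset_span ⟨i, rfl⟩
  have hrow (i j) : z i i * v i + (z i j + z j i) * v j ∈ J * Ideal.span (Set.range v) :=
    add_mem (Ideal.mul_mem_mul (hdiag i) (hv i)) (Ideal.mul_mem_mul (hskew i j) (hv j))
  convert hrow i (i + 1) using 1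
  fin_cases i <;> simp [mulVec, vec3_dotProduct, cross_apply] <;> ring

lemma mul_dotProduct_sub_mem {J : Ideal R} {x α e : Fin 3 → R} {d : R}
    (he : ∀ k i, x i * e k - d * (Pi.single k 1 ⨯₃ α) i ∈ J) (s : Fin 3 → R) (i : Fin 3) :
    x i * (s ⬝ᵥ e) - d * (s ⨯₃ α) i ∈ J := by
  have hsum : x i * (s ⬝ᵥ e) - d * (s ⨯₃ α) i =
      ∑ k, s k * (x i * e k - d * (Pi.single k 1 ⨯₃ α) i) := by
    fin_cases i <;> simp [cross_apply, vec3_dotProduct, Fin.sum_univ_three] <;> ring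
  rw [hsum]
  exact sum_mem fun k _ => J.mul_mem_left _ (he k i)

namespace IsReesKoszul

variable {x α e : Fin 3 → R} {G : Fin 3 → MvPolynomial (Fin 3) R} {d ξ : R}

lemma mul_mem_pow_three (h : IsReesKoszul x α G d) {r : R}
    (hr : r ∈ Ideal.span (Set.range x) * Ideal.span (Set.range α)) :
    d * r ∈ Ideal.span (Set.range α) ^ 3 := by
  have hle : Ideal.span (Set.range x) ≤ Submodule.colon (Ideal.span (Set.range α) ^ 2) {d} :=
    Ideal.span_le.2 (Set.range_subset_iff.2 fun i =>
      Submodule.mem_colon_singleton.2 (h.mul_mem_pow_two i))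
  refine Submodule.mul_induction_on hr (fun s hs t ht => ?_) fun s t hs ht => ?_
  · rw [pow_succ, mul_left_comm, ← mul_assoc]
    exact Ideal.mul_mem_mul (Submodule.mem_colon_singleton.1 (hle hs)) ht
  · rw [mul_add]
    exact add_mem hs ht

lemma mul_cross_mem_pow_three_iff (h : IsReesKoszul x α G d) {s : Fin 3 → R} :
    (∀ i, d * (s ⨯₃ α) i ∈ Ideal.span (Set.range α) ^ 3) ↔
      ∀ i, s i ∈ Ideal.span (Set.range x) := by
  constructor
  · intro hs
    have hs₀ := h.mem_span_of_mul_dotProduct_mem (s := ![0, -s 2, s 1]) (by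
      convert hs 0 using 2
      rw [vec3_dotProduct]
      simp only [cross_apply, cons_val]
      ring)
    have hs₁ := h.mem_span_of_mul_dotProduct_mem (s := ![s 2, 0, -s 0]) (by
      convert hs 1 using 2
      rw [vec3_dotProduct]
      simp only [cross_apply, cons_val]
      ring)
    intro i
    fin_cases i
    · simpa using hs₁ 2
    · exact hs₀ 2
    · exact hs₁ 0
  · intro hs i
    have hα (j) : α j ∈ Ideal.span (Set.range α) := Ideal.subset_span ⟨j, rfl⟩
    refine h.mul_mem_pow_three ?_
    fin_cases i <;>
      exact sub_mem (Ideal.mul_mem_mul (hs _) (hα _)) (Ideal.mul_mem_mul (hs _) (hα _))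

lemma dotProduct_mem_colon_iff (h : IsReesKoszul x α G d)
    (he : ∀ k i, x i * e k - d * (Pi.single k 1 ⨯₃ α) i ∈ Ideal.span (Set.range α) ^ 3)
    (s : Fin 3 → R) :
    s ⬝ᵥ e ∈ Submodule.colon (Ideal.span (Set.range α) ^ 3)
        (Ideal.span (Set.range x) : Set R) ↔ ∀ i, s i ∈ Ideal.span (Set.range x) := by
  rw [mem_colon_span_range_iff, ← h.mul_cross_mem_pow_three_iff]
  refine forall_congr' fun i => ?_
  simpa using Submodule.add_mem_iff_right (y := d * (s ⨯₃ α) i) _ (mul_dotProduct_sub_mem he s i)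

lemma mem_colon_pow_two (h : IsReesKoszul x α G d)
    (he : ∀ k i, x i * e k - d * (Pi.single k 1 ⨯₃ α) i ∈ Ideal.span (Set.range α) ^ 3)
    (k : Fin 3) :
    e k ∈ Submodule.colon (Ideal.span (Set.range α) ^ 3)
      ((Ideal.span (Set.range x) ^ 2 : Ideal R) : Set R) := by
  rw [pow_two, colon_mul, mem_colon_span_range_iff]
  intro i
  rw [mem_colon_span_range_iff]
  intro j
  have hcross : (Pi.single k 1 ⨯₃ α) i ∈ Ideal.span (Set.range α) := by
    rw [← cross_anticomm, Pi.neg_apply]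
    exact neg_mem (cross_apply_mem_span_range α _ i)
  have hd := h.mul_mem_pow_three (Ideal.mul_mem_mul (Ideal.subset_span ⟨j, rfl⟩) hcross)
  convert add_mem (Ideal.mul_mem_left _ (x j) (he k i)) hd using 1
  ring

lemma exists_sub_dotProduct_mem_colon (h : IsReesKoszul x α G d)
    (he : ∀ k i, x i * e k - d * (Pi.single k 1 ⨯₃ α) i ∈ Ideal.span (Set.range α) ^ 3)
    (hξ : ξ ∈ Submodule.colon (Ideal.span (Set.range α) ^ 3)
      ((Ideal.span (Set.range x) ^ 2 : Ideal R) : Set R)) :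
    ∃ s, ξ - s ⬝ᵥ e ∈ Submodule.colon (Ideal.span (Set.range α) ^ 3)
      (Ideal.span (Set.range x) : Set R) := by
  simp only [pow_two (Ideal.span (Set.range x)), colon_mul, mem_colon_span_range_iff] at hξ ⊢
  choose η hη hξη using fun i => h.exists_sub_mul_mem_pow_three (hξ i)
  simp only [mem_span_range_iff_exists_dotProduct] at hη
  choose z hz using hη
  have hzα (i) : x i * ξ - d * (z *ᵥ α) i ∈ Ideal.span (Set.range α) ^ 3 := by
    rw [show (z *ᵥ α) i = η i from hz i]
    exact hξη i
  obtain ⟨s, hs⟩ := exists_mulVec_sub_cross_mem (h.dotProduct_mulVec_mem_span hzα)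
  refine ⟨s, fun i => ?_⟩
  convert sub_mem (add_mem (hzα i) (h.mul_mem_pow_three (hs α i)))
    (mul_dotProduct_sub_mem he s i) using 1
  rw [Pi.sub_apply]
  ring

theorem nonempty_colon_quotient_equiv (h : IsReesKoszul x α G d) {I Q : Ideal R}
    (hI : I = Ideal.span (Set.range α)) (hQ : Q = Ideal.span (Set.range x)) :
    Nonempty ((Submodule.colon (I ^ 3) ((Q ^ 2 : Ideal R) : Set R) ⧸
      Submodule.comap (Submodule.colon (I ^ 3) ((Q ^ 2 : Ideal R) : Set R)).subtype
        (Submodule.colon (I ^ 3) (Q : Set R))) ≃ₗ[R]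
      (Fin 3 → R ⧸ Q)) := by
  subst hI hQ
  choose e he using fun k => h.exists_mul_sub_mul_cross_mem (Pi.single k 1)
  exact nonempty_quotient_equiv_pi (h.mem_colon_pow_two he) (h.dotProduct_mem_colon_iff he)
    fun ξ hξ => h.exists_sub_dotProduct_mem_colon he hξ

end IsReesKoszul

lemma exists_vecMul_eq_of_forall_mem_mul {m n : Type*} [Fintype m] {J : Ideal R} {v : m → R}
    {w : n → R} (hw : ∀ j, w j ∈ J * Ideal.span (Set.range v)) :
    ∃ q : Matrix m n R, (∀ i j, q i j ∈ J) ∧ v ᵥ* q = w := by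
  simp only [← smul_eq_mul, ← Ideal.submodule_span_eq,
    Submodule.mem_ideal_smul_span_iff_exists_sum] at hw
  choose a ha hsum using hw
  refine ⟨fun i j => a j i, fun i j => ha j i, funext fun j => ?_⟩
  rw [← hsum j, Finsupp.sum_fintype _ _ (by simp)]
  simp [vecMul, dotProduct, mul_comm]

lemma reesMap_comp_X_cross_mulVec {x α : Fin 3 → R} {q : Matrix (Fin 3) (Fin 3) R} {d : R}
    (hd : α ⨯₃ (q *ᵥ α) = d • x) :
    reesMap α ∘ (MvPolynomial.X ⨯₃ (q.map MvPolynomial.C *ᵥ MvPolynomial.X)) =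
      (C d * X ^ 2) • (reesMap α ∘ MvPolynomial.C ∘ x) := by
  have hX : reesMap α ∘ MvPolynomial.X = (X : R[X]) • (C ∘ α) :=
    funext fun i => (MvPolynomial.aeval_X _ i).trans (mul_comm _ _)
  have hqX : reesMap α ∘ (q.map MvPolynomial.C *ᵥ MvPolynomial.X) = (X : R[X]) • (C ∘ (q *ᵥ α)) :=
    funext fun i => (reesMap_linearForm α (q i)).trans (mul_comm _ _)
  have hcross := ringHom_comp_cross (reesMap α : MvPolynomial (Fin 3) R →+* R[X]) MvPolynomial.X
    (q.map MvPolynomial.C *ᵥ MvPolynomial.X)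
  simp only [RingHom.coe_coe] at hcross
  rw [hcross, hX, hqX, map_smul, LinearMap.map_smul₂, ← ringHom_comp_cross, hd]
  ext1 i
  simp only [Pi.smul_apply, Function.comp_apply, smul_eq_mul, map_mul, MvPolynomial.algHom_C,
    algebraMap_eq]
  ring

theorem exists_isReesKoszul {x y : Fin 3 → R} (hx : IsWeaklyRegular R [x 0, x 1, x 2])
    (hy : IsSMulRegular (R ⧸ Ideal.span {x 0}) (y 0))
    (hα : IsWeaklyRegular R [(y ⨯₃ x) 2, (y ⨯₃ x) 1])
    (hyx : ∀ j, y j ∈ Ideal.span (Set.range x) ^ 2) :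
    ∃ G d, IsReesKoszul x (y ⨯₃ x) G d := by
  simp only [pow_two] at hyx
  obtain ⟨q, hqx, hq⟩ := exists_vecMul_eq_of_forall_mem_mul hyx
  obtain ⟨d, hd⟩ := exists_eq_smul_of_cross_eq_zero (isWeaklyRegular_triple_iff.1 hx).1
    (P := (y ⨯₃ x) ⨯₃ (q *ᵥ (y ⨯₃ x))) (by
      rw [cross_cross_eq_dotProduct_smul_sub, dotProduct_mulVec, hq, dot_self_cross,
        dot_cross_self, zero_smul, zero_smul, sub_zero])
  have hdot := linearForm_vecMul x q
  rw [hq] at hdot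
  have hqC (i j) : q.map MvPolynomial.C i j ∈
      Ideal.span (Set.range (MvPolynomial.C (σ := Fin 3) ∘ x)) := by
    rw [Set.range_comp, ← Ideal.map_span]
    exact Ideal.mem_map_of_mem _ (hqx i j)
  refine ⟨q.map MvPolynomial.C *ᵥ MvPolynomial.X, d, hx, ?_, ?_, fun i => ?_, ?_⟩
  · rw [← hdot]
    exact isWeaklyRegular_linearForm (isWeaklyRegular_triple_iff.1 hx).1 hα
  · rw [← hdot]
    refine le_antisymm (ker_reesMap_le hx hy hα) (Ideal.span_le.2 ?_)
    rintro _ (rfl | rfl)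
    · exact (reesMap_linearForm _ x).trans (by simp)
    · exact (reesMap_linearForm _ y).trans (by simp)
  · rw [mulVec, dotProduct]
    exact sum_mem fun j _ => Ideal.mul_mem_right _ _ (hqC i j)
  · exact reesMap_comp_X_cross_mulVec hd

theorem third_power_colon_layer_general {x y : Fin 3 → R}
    (hx : IsWeaklyRegular R [x 0, x 1, x 2])
    (hy : IsSMulRegular (R ⧸ Ideal.span {x 0}) (y 0))
    (hα : IsWeaklyRegular R [(y ⨯₃ x) 2, (y ⨯₃ x) 1])
    (hyx : ∀ j, y j ∈ Ideal.span (Set.range x) ^ 2)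
    {I Q : Ideal R} (hI : I = Ideal.span (Set.range (y ⨯₃ x))) (hQ : Q = Ideal.span (Set.range x)) :
    Nonempty ((Submodule.colon (I ^ 3) ((Q ^ 2 : Ideal R) : Set R) ⧸
      Submodule.comap (Submodule.colon (I ^ 3) ((Q ^ 2 : Ideal R) : Set R)).subtype
        (Submodule.colon (I ^ 3) (Q : Set R))) ≃ₗ[R]
      (Fin 3 → R ⧸ Q)) := by
  obtain ⟨G, d, h⟩ := exists_isReesKoszul hx hy hα hyx
  exact h.nonempty_colon_quotient_equiv hI hQ

end ColonLayer

/-- Assume `α = 1`, `α' = 2`, `2β ≤ β'`, `2γ ≤ γ'` and `Q = (x, y^β, z^γ)`.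
Then `(I³ :_R Q²)/(I³ :_R Q) ≅ (R/Q)^{⊕3}`. -/
theorem third_power_colon_layer
    {R : Type*} [CommRing R] [IsNoetherianRing R] [IsLocalRing R]
    (hdim : ringKrullDim R = 3)
    (hCM : ∀ u v w : R, (Ideal.span {u, v, w}).radical = maximalIdeal R →
      RingTheory.Sequence.IsRegular R [u, v, w])
    (x y z : R) (hsop : (Ideal.span {x, y, z}).radical = maximalIdeal R)
    (β γ β' γ' : ℕ)
    (hβ : 0 < β) (hγ : 0 < γ)
    (hββ' : 2 * β ≤ β') (hγγ' : 2 * γ ≤ γ')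
    (a b c : R)
    (ha : a = z ^ (γ + γ') - x ^ 2 * y ^ β)
    (hb : b = x ^ 3 - y ^ β' * z ^ γ)
    (hc : c = y ^ (β + β') - x * z ^ γ')
    (I : Ideal R) (hI : I = Ideal.span {a, b, c})
    (Q : Ideal R) (hQ : Q = Ideal.span {x, y ^ β, z ^ γ}) :
    Nonempty
      ((↥(Submodule.colon ((I ^ 3 : Ideal R) : Submodule R R)
            ((Q ^ 2 : Ideal R) : Submodule R R)) ⧸
          Submodule.comap
            (Submodule.colon ((I ^ 3 : Ideal R) : Submodule R R)
              ((Q ^ 2 : Ideal R) : Submodule R R)).subtype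
            (Submodule.colon ((I ^ 3 : Ideal R) : Submodule R R) (Q : Submodule R R)))
        ≃ₗ[R] (Fin 3 → R ⧸ Q)) := by
  have hreg {m n : ℕ} (hm : 0 < m) (hn : 0 < n) : IsWeaklyRegular R [x, y ^ m, z ^ n] :=
    (hCM _ _ _ ((radical_span_pow_triple x y z hm hn).trans hsop)).toIsWeaklyRegular
  have hcross : crossProduct ![y ^ β', z ^ γ', x ^ 2] ![x, y ^ β, z ^ γ] = ![a, b, c] := by
    rw [cross_apply, ha, hb, hc]
    ext i
    fin_cases i <;> simp <;> ring
  have hcb : IsWeaklyRegular R [c, b] := by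
    refine (isWeaklyRegular_triple_iff.1 (hCM c b (z ^ γ) ?_).toIsWeaklyRegular).1
    rw [hb, hc, radical_span_minors x y z (by lia) hγ three_pos (by lia), hsop]
  obtain ⟨hxQ, hyQ, hzQ⟩ := mem_span_triple x (y ^ β) (z ^ γ)
  refine third_power_colon_layer_general (x := ![x, y ^ β, z ^ γ]) (y := ![y ^ β', z ^ γ', x ^ 2])
    (hreg hβ hγ) (isWeaklyRegular_pair_iff.1
      (isWeaklyRegular_triple_iff.1 (hreg (m := β') (by lia) hγ)).1).2
    (by rwa [hcross]) ?_ (by rw [hI, hcross, range_vec3]) (by rw [hQ, range_vec3])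
  simp only [range_vec3, Fin.forall_fin_succ]
  exact ⟨pow_mem_pow_of_mul_le hyQ (by lia), pow_mem_pow_of_mul_le hzQ (by lia),
    Ideal.pow_mem_pow hxQ 2, by simp⟩
end

section
/- Assume α = 1, α' = 2, 2β ≤ β', 2γ ≤ γ', Q = (x, y^β, z^γ)R, and that 2 is a unit in R. Then depth R/(I³ :_R Q²) > 0, so I^{(3)} = I³ :_R Q², and length_R(I^{(3)}/I³) = 6 · length_R(R/Q). -/
open IsLocalRing

/-- The `n`-th symbolic power `I⁽ⁿ⁾ = ⋂_{p ∈ Min(R/I)} (IⁿR_p ∩ R)`. -/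
noncomputable def symbolicPower {R : Type*} [CommRing R] (I : Ideal R) (n : ℕ) : Ideal R :=
  ⨅ p : I.minimalPrimes,
    haveI : Ideal.IsPrime (p : Ideal R) := p.2.1.1
    Ideal.comap (algebraMap R (Localization.AtPrime (p : Ideal R)))
      (Ideal.map (algebraMap R (Localization.AtPrime (p : Ideal R))) (I ^ n))

/-- `M` has (finite) length `n` over `R`: there is a composition series from
`⊥` to `⊤` of length `n`. -/
def HasLength (R M : Type*) [CommRing R] [AddCommGroup M] [Module R M] (n : ℕ) : Prop :=
  ∃ s : CompositionSeries (Submodule R M), s.head = ⊥ ∧ s.last = ⊤ ∧ s.length = n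

/-! Put `X = x`, `Y = y ^ β`, `Z = z ^ γ`, `p = y ^ (β' - 2 * β)`, `q = z ^ (γ' - 2 * γ)`, and
let `K` be generated by `I³` and the three extra elements `d, e, f` of `MinorData`. Modulo `Y`, and
up to units, the ten generators of `K` have the leading terms `X ^ (9 - i) * u i`, where `u i` is a
product of powers of `q` and `Z` that divides `u (i + 1)`; the quotients `u (i + 1) / u i` are the
diagonal entries of the `9 × 10` matrix `syzygyMatrix`, whose rows therefore span the syzygies
modulo `Y`. As the rows lift to syzygies over `R`, the element `Y` is regular on `R ⧸ K`, whence
`I⁽³⁾ = K = I³ : Q²`, and by Nakayama's lemma the rows span the syzygies over `R`.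

The syzygies show that a combination of `d, e, f` lies in `I³` exactly if its coefficient vector
is `S *ᵥ v` with `S` symmetric and `v = (X, Y, Z)`, so `I⁽³⁾ / I³` is `R³` modulo these products.
As `2` is a unit, every matrix is the sum of a symmetric and a skew one, and `A *ᵥ v` for a skew
`A` is a cross product `v × r`; by the Koszul relations of `v` it equals some `S *ᵥ v` only if
`r ∈ Q R³`. Hence `v × ·` maps `R³ / Q R³` isomorphically onto `Q R³` modulo the symmetric
products, and the length is `3 + 3` times that of `R / Q`. -/

open Matrix

section Length

variable {R M M' : Type*} [CommRing R] [AddCommGroup M] [Module R M] [AddCommGroup M'] [Module R M']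

lemma length_quotient_eq_add_sup_range (f : M →ₗ[R] M') (A : Submodule R M') :
    Module.length R (M' ⧸ A) =
      Module.length R (M ⧸ A.comap f) + Module.length R (M' ⧸ A ⊔ LinearMap.range f) := by
  have hle : A ≤ A ⊔ LinearMap.range f := le_sup_left
  refine Module.length_eq_add_of_exact ((A.comap f).mapQ A f le_rfl) (Submodule.factor hle) ?_
    (Submodule.factor_surjective hle) ?_
  · rw [← LinearMap.ker_eq_bot, Submodule.ker_mapQ, Submodule.mkQ_map_self]
  · rw [LinearMap.exact_iff, Submodule.range_mapQ, Submodule.factor, Submodule.ker_mapQ,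
      Submodule.comap_id, Submodule.map_sup, Submodule.mkQ_map_self, bot_sup_eq]

lemma length_sup_range_quotient (f : M →ₗ[R] M') (A : Submodule R M') :
    Module.length R (↥(A ⊔ LinearMap.range f) ⧸ A.comap (A ⊔ LinearMap.range f).subtype) =
      Module.length R (M ⧸ A.comap f) := by
  let g : M →ₗ[R] ↥(A ⊔ LinearMap.range f) :=
    f.codRestrict _ fun r => le_sup_right (a := A) (LinearMap.mem_range_self f r)
  have hsup : A.comap (A ⊔ LinearMap.range f).subtype ⊔ LinearMap.range g = ⊤ := by
    refine Submodule.map_injective_of_injective (Submodule.subtype_injective _) ?_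
    rw [Submodule.map_sup, Submodule.map_comap_subtype, ← LinearMap.range_comp,
      inf_eq_right.2 le_sup_left, Submodule.map_top, Submodule.range_subtype,
      LinearMap.subtype_comp_codRestrict]
  rw [length_quotient_eq_add_sup_range g, hsup,
    Module.length_eq_zero (M := ↥(A ⊔ LinearMap.range f) ⧸ ⊤), add_zero, ← Submodule.comap_comp,
    LinearMap.subtype_comp_codRestrict]

lemma length_pi_quotient_const {ι : Type*} [Fintype ι] (Q : Ideal R) :
    Module.length R ((ι → R) ⧸ Submodule.pi Set.univ fun _ : ι => Q) =
      Fintype.card ι * Module.length R (R ⧸ Q) := by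
  classical
  rw [(Submodule.quotientPi fun _ : ι => Q).length_eq, Module.length_pi_of_fintype]
  simp

end Length

section SymmProducts

variable {R ι : Type*} [CommRing R]

lemma smul_top_eq_pi [Finite ι] (Q : Ideal R) :
    Q • (⊤ : Submodule R (ι → R)) = Submodule.pi Set.univ fun _ => Q := by
  classical
  have := Fintype.ofFinite ι
  refine le_antisymm (Submodule.smul_le.2 fun s hs r _ i _ => Q.mul_mem_right _ hs) fun r hr => ?_
  rw [pi_eq_sum_univ' r]
  exact sum_mem fun i _ => Submodule.smul_mem_smul (hr i trivial) Submodule.mem_top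

variable [Fintype ι]

/-- The submodule of all products `S *ᵥ v` with `S` a symmetric matrix. For `v = ![X, Y, Z]` these
are the relations, modulo the ordinary cube, among the extra generators of the symbolic cube. -/
def symmProducts (v : ι → R) : Submodule R (ι → R) where
  carrier := {r | ∃ S : Matrix ι ι R, S.IsSymm ∧ S *ᵥ v = r}
  zero_mem' := ⟨0, isSymm_zero, zero_mulVec v⟩
  add_mem' := by
    rintro _ _ ⟨S, hS, rfl⟩ ⟨T, hT, rfl⟩
    exact ⟨S + T, hS.add hT, add_mulVec S T v⟩
  smul_mem' := by
    rintro k _ ⟨S, hS, rfl⟩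
    exact ⟨k • S, hS.smul k, smul_mulVec k S v⟩

lemma mem_pi_span_range {v r : ι → R} :
    r ∈ (Submodule.pi Set.univ fun _ : ι => Ideal.span (Set.range v)) ↔
      ∃ A : Matrix ι ι R, A *ᵥ v = r := by
  simp only [Submodule.mem_pi, Set.mem_univ, forall_const, Ideal.mem_span_range_iff_exists_fun]
  rw [Classical.skolem]
  simp only [funext_iff, mulVec, dotProduct]
  rfl

lemma symmProducts_le_pi_span_range (v : ι → R) :
    symmProducts v ≤ Submodule.pi Set.univ fun _ : ι => Ideal.span (Set.range v) := by
  rintro _ ⟨S, -, rfl⟩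
  exact mem_pi_span_range.2 ⟨S, rfl⟩

lemma dotProduct_mul_dotProduct_smul_mem_symmProducts (h2 : IsUnit (2 : R)) (v u w r : ι → R) :
    ((u ⬝ᵥ v) * (w ⬝ᵥ v)) • r ∈ symmProducts v := by
  obtain ⟨h, hh⟩ := h2.exists_right_inv
  refine ⟨h • ((w ⬝ᵥ v) • (vecMulVec u r + vecMulVec r u)
    + (u ⬝ᵥ v) • (vecMulVec w r + vecMulVec r w)
    - (r ⬝ᵥ v) • (vecMulVec u w + vecMulVec w u)), ?_, ?_⟩
  · simp only [IsSymm, transpose_smul, transpose_sub, transpose_add, transpose_vecMulVec]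
    simp only [add_comm]
  · ext i
    simp only [smul_mulVec, sub_mulVec, add_mulVec, vecMulVec_mulVec, Pi.smul_apply, Pi.sub_apply,
      Pi.add_apply, smul_eq_mul, op_smul_eq_smul]
    linear_combination ((u ⬝ᵥ v) * (w ⬝ᵥ v) * r i) * hh

lemma span_range_sq_smul_top_le_symmProducts (h2 : IsUnit (2 : R)) (v : ι → R) :
    Ideal.span (Set.range v) ^ 2 • ⊤ ≤ symmProducts v := by
  refine Submodule.smul_le.2 fun s hs r _ => ?_
  rw [sq] at hs
  induction hs using Submodule.mul_induction_on' with
  | mem_mul_mem s hs t ht =>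
    obtain ⟨u, rfl⟩ := Ideal.mem_span_range_iff_exists_fun.1 hs
    obtain ⟨w, rfl⟩ := Ideal.mem_span_range_iff_exists_fun.1 ht
    exact dotProduct_mul_dotProduct_smul_mem_symmProducts h2 v u w r
  | add s _ t _ hs ht => exact add_smul s t r ▸ add_mem hs ht

lemma crossProduct_eq_mulVec (v r : Fin 3 → R) :
    v ⨯₃ r = !![0, r 2, -r 1; -r 2, 0, r 0; r 1, -r 0, 0] *ᵥ v := by
  rw [cross_apply]
  ext i
  fin_cases i <;> simp [mulVec, dotProduct, Fin.sum_univ_three] <;> ring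

variable {v : Fin 3 → R}

lemma range_crossProduct_le_pi_span_range (v : Fin 3 → R) :
    LinearMap.range (crossProduct v) ≤ Submodule.pi Set.univ fun _ => Ideal.span (Set.range v) := by
  rintro _ ⟨r, rfl⟩
  exact mem_pi_span_range.2 ⟨_, (crossProduct_eq_mulVec v r).symm⟩

lemma mem_span_range_of_crossProduct_mem_symmProducts (h2 : IsUnit (2 : R))
    (hv : ∀ r, r ⬝ᵥ v = 0 → ∀ i, r i ∈ Ideal.span (Set.range v)) {r : Fin 3 → R}
    (hr : v ⨯₃ r ∈ symmProducts v) (i : Fin 3) : r i ∈ Ideal.span (Set.range v) := by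
  obtain ⟨S, hS, hSv⟩ := hr
  rw [crossProduct_eq_mulVec] at hSv
  set C : Matrix (Fin 3) (Fin 3) R := !![0, r 2, -r 1; -r 2, 0, r 0; r 1, -r 0, 0] with hC
  have hmem (i j : Fin 3) : C i j - S i j ∈ Ideal.span (Set.range v) :=
    hv ((C - S) i) (congrFun (by rw [sub_mulVec, hSv, sub_self] : (C - S) *ᵥ v = 0) i) j
  have hskew (i j : Fin 3) : C i j - C j i ∈ Ideal.span (Set.range v) := by
    convert sub_mem (hmem i j) (hmem j i) using 1
    rw [hS.apply i j]
    ring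
  rw [← Ideal.unit_mul_mem_iff_mem _ h2, two_mul]
  fin_cases i
  · simpa [hC] using hskew 1 2
  · simpa [hC] using hskew 2 0
  · simpa [hC] using hskew 0 1

lemma comap_crossProduct_symmProducts (h2 : IsUnit (2 : R))
    (hv : ∀ r, r ⬝ᵥ v = 0 → ∀ i, r i ∈ Ideal.span (Set.range v)) :
    (symmProducts v).comap (crossProduct v) =
      Submodule.pi Set.univ fun _ => Ideal.span (Set.range v) := by
  refine le_antisymm
    (fun r hr i _ => mem_span_range_of_crossProduct_mem_symmProducts h2 hv hr i) ?_
  rw [← Submodule.map_le_iff_le_comap, ← smul_top_eq_pi, Submodule.map_smul'', Submodule.map_top]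
  refine le_trans ?_ (span_range_sq_smul_top_le_symmProducts h2 v)
  rw [sq, mul_smul, smul_top_eq_pi]
  exact Submodule.smul_mono le_rfl (range_crossProduct_le_pi_span_range v)

lemma symmProducts_sup_range_crossProduct (h2 : IsUnit (2 : R)) :
    symmProducts v ⊔ LinearMap.range (crossProduct v) =
      Submodule.pi Set.univ fun _ => Ideal.span (Set.range v) := by
  refine le_antisymm
    (sup_le (symmProducts_le_pi_span_range v) (range_crossProduct_le_pi_span_range v)) ?_
  intro r hr
  obtain ⟨A, rfl⟩ := mem_pi_span_range.1 hr
  obtain ⟨h, hh⟩ := h2.exists_right_inv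
  refine Submodule.mem_sup.2 ⟨_, ⟨h • (A + Aᵀ), (isSymm_add_transpose_self A).smul h, rfl⟩, _,
    ⟨h • ![A 1 2 - A 2 1, A 2 0 - A 0 2, A 0 1 - A 1 0], rfl⟩, ?_⟩
  rw [crossProduct_eq_mulVec, ← add_mulVec]
  congr 1
  ext i j
  fin_cases i <;> fin_cases j <;> simp <;> grind

lemma length_quotient_symmProducts (h2 : IsUnit (2 : R))
    (hv : ∀ r, r ⬝ᵥ v = 0 → ∀ i, r i ∈ Ideal.span (Set.range v)) :
    Module.length R ((Fin 3 → R) ⧸ symmProducts v) =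
      6 * Module.length R (R ⧸ Ideal.span (Set.range v)) := by
  rw [length_quotient_eq_add_sup_range (crossProduct v), comap_crossProduct_symmProducts h2 hv,
    symmProducts_sup_range_crossProduct h2, length_pi_quotient_const, Fintype.card_fin,
    ← add_mul]
  norm_num

end SymmProducts

section RegularBefore

variable {B : Type*} [CommRing B]

/-- The submonoid of all `u` such that `u, X` is a weakly regular sequence. -/
def regularBefore (X : B) : Submonoid B where
  carrier := {u | u ∈ nonZeroDivisors B ∧ ∀ r, u ∣ X * r → u ∣ r}
  one_mem' := ⟨one_mem _, fun r _ => one_dvd r⟩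
  mul_mem' := by
    rintro u₁ u₂ ⟨hu₁, h₁⟩ ⟨hu₂, h₂⟩
    refine ⟨mul_mem hu₁ hu₂, fun r hr => ?_⟩
    obtain ⟨r, rfl⟩ := h₁ r (dvd_of_mul_right_dvd hr)
    rw [mul_left_comm, dvd_cancel_left_mem_nonZeroDivisors hu₁] at hr
    exact mul_dvd_mul_left u₁ (h₂ r hr)

variable {X u v : B}

lemma mem_regularBefore_of_dvd (hv : v ∈ regularBefore X) (huv : u ∣ v) : u ∈ regularBefore X := by
  obtain ⟨w, rfl⟩ := huv
  have huw := mul_mem_nonZeroDivisors.1 hv.1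
  refine ⟨huw.1, fun r hr => ?_⟩
  rw [← dvd_cancel_right_mem_nonZeroDivisors huw.2]
  refine hv.2 _ ?_
  rw [← mul_assoc]
  exact mul_dvd_mul_right hr w

lemma dvd_of_dvd_pow_mul (hu : u ∈ regularBefore X) (k : ℕ) {r : B} (h : u ∣ X ^ k * r) :
    u ∣ r := by
  induction k with
  | zero => simpa using h
  | succ k ih => exact ih (hu.2 _ (by rwa [← mul_assoc, ← pow_succ']))

end RegularBefore

section Syzygies

variable {R m n : Type*} [CommRing R] [Fintype m] [Fintype n]

/-- Every syzygy of `g` is a linear combination of the rows of `M`. That the rows are themselves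
syzygies, `M *ᵥ g = 0`, is not part of the notion. -/
def RowsSpanSyzygies (M : Matrix m n R) (g : n → R) : Prop :=
  ∀ r, r ⬝ᵥ g = 0 → ∃ k, k ᵥ* M = r

end Syzygies

section Staircase

variable {B : Type*} [CommRing B]

lemma dvd_of_dvd_sub_unit_mul_pow {X u u' s m g e : B} {k : ℕ}
    (hu' : u' ∈ regularBefore X) (hm : m * u ∣ u') (he : IsUnit e)
    (hg : u' ∣ g - e * X ^ k * u) (h : u' ∣ s * g) : m ∣ s := by
  have hpow : u' ∣ X ^ k * (e * (s * u)) := by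
    convert dvd_sub h (hg.mul_left s) using 1
    ring
  have hu := mem_regularBefore_of_dvd hu' (dvd_of_mul_left_dvd hm)
  exact (dvd_cancel_right_mem_nonZeroDivisors hu.1).1
    (hm.trans (he.dvd_mul_left.1 (dvd_of_dvd_pow_mul hu' k hpow)))

lemma rowsSpanSyzygies_of_column_eq_zero {m n : ℕ} {M : Matrix (Fin (m + 1)) (Fin (n + 1)) B}
    {g : Fin (n + 1) → B} (hrow : M 0 ⬝ᵥ g = 0) (hcol : ∀ i : Fin m, M i.succ 0 = 0)
    (hdvd : ∀ s, s * g 0 ∈ Ideal.span (Set.range (Fin.tail g)) → M 0 0 ∣ s)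
    (hsub : RowsSpanSyzygies (M.submatrix Fin.succ Fin.succ) (Fin.tail g)) :
    RowsSpanSyzygies M g := by
  intro r hr
  have hsplit (w : Fin (n + 1) → B) : w ⬝ᵥ g = w 0 * g 0 + Fin.tail w ⬝ᵥ Fin.tail g :=
    Fin.sum_univ_succ _
  rw [hsplit] at hr hrow
  obtain ⟨t, ht⟩ := hdvd (r 0) (Ideal.mem_span_range_iff_exists_fun.2
    ⟨-Fin.tail r, (neg_dotProduct _ _).trans (neg_eq_of_add_eq_zero_left hr)⟩)
  obtain ⟨k, hk⟩ := hsub (Fin.tail r - t • Fin.tail (M 0)) (by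
    rw [sub_dotProduct, smul_dotProduct, smul_eq_mul]
    linear_combination hr - t * hrow - g 0 * ht)
  refine ⟨Fin.cons t k, funext <| Fin.cases ?_ fun j => ?_⟩ <;>
    simp only [vecMul, dotProduct, Fin.sum_univ_succ, Fin.cons_zero, Fin.cons_succ]
  · simp [hcol, ht, mul_comm]
  · exact eq_sub_iff_add_eq'.1 (congrFun hk j)

lemma zero_dvd_of_staircase {n : ℕ} {g u : Fin (n + 1) → B}
    (hu : ∀ i : Fin n, u i.castSucc ∣ u i.succ)
    (hg : ∀ i : Fin n, ∃ c, u i.succ ∣ g i.castSucc - c * u i.castSucc)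
    (hlast : g (Fin.last n) = u (Fin.last n)) (j : Fin (n + 1)) : u 0 ∣ g j := by
  have hu0 (j : Fin (n + 1)) : u 0 ∣ u j :=
    j.induction dvd_rfl fun i hi => hi.trans (hu i)
  refine j.lastCases (hlast ▸ hu0 _) fun i => ?_
  obtain ⟨c, hc⟩ := hg i
  exact (dvd_sub_left ((hu0 _).mul_left c)).1 ((hu0 _).trans hc)

theorem rowsSpanSyzygies_of_staircase {n : ℕ} {X : B} {M : Matrix (Fin n) (Fin (n + 1)) B}
    {g u : Fin (n + 1) → B} (hMg : M *ᵥ g = 0) (htri : ∀ i j, j < i.castSucc → M i j = 0)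
    (hu : ∀ i, u i ∈ regularBefore X) (hdiag : ∀ i, M i i.castSucc * u i.castSucc ∣ u i.succ)
    (hlead : ∀ i : Fin n, ∃ e k, IsUnit e ∧ u i.succ ∣ g i.castSucc - e * X ^ k * u i.castSucc)
    (hlast : g (Fin.last n) = u (Fin.last n)) :
    RowsSpanSyzygies M g := by
  induction n with
  | zero =>
    intro r hr
    have hr0 : r 0 * u 0 = 0 := by
      rw [show u 0 = g 0 from hlast.symm]
      simpa [dotProduct] using hr
    refine ⟨0, funext fun j => ?_⟩
    rw [zero_vecMul, Fin.fin_one_eq_zero j]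
    exact ((hu 0).1.2 _ hr0).symm
  | succ n ih =>
    have hdvd (j : Fin (n + 1)) : u 1 ∣ Fin.tail g j :=
      zero_dvd_of_staircase (g := Fin.tail g) (u := Fin.tail u)
        (fun i => dvd_of_mul_left_dvd (hdiag i.succ))
        (fun i => let ⟨e, k, _, h⟩ := hlead i.succ; ⟨e * X ^ k, h⟩) hlast j
    refine rowsSpanSyzygies_of_column_eq_zero (congrFun hMg 0)
      (fun i => htri i.succ 0 (Fin.castSucc_pos i.succ_pos)) ?_
      (ih (u := Fin.tail u) ?_ ?_ (fun i => hu i.succ) (fun i => hdiag i.succ)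
        (fun i => hlead i.succ) hlast)
    · intro s hs
      obtain ⟨e, k, he, hg⟩ := hlead 0
      refine dvd_of_dvd_sub_unit_mul_pow (hu 1) (hdiag 0) he hg ?_
      rw [← Ideal.mem_span_singleton]
      refine Ideal.span_le.2 ?_ hs
      rintro _ ⟨j, rfl⟩
      exact Ideal.mem_span_singleton.2 (hdvd j)
    · refine funext fun i => ?_
      have hi : (M *ᵥ g) i.succ = 0 := congrFun hMg i.succ
      rw [mulVec, dotProduct, Fin.sum_univ_succ, htri i.succ 0 (Fin.castSucc_pos i.succ_pos),
        zero_mul, zero_add] at hi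
      exact hi
    · exact fun i j hij => htri i.succ j.succ (Fin.succ_lt_succ_iff.2 hij)

end Staircase

section Lifting

variable {R m n : Type*} [CommRing R] [Fintype m] [Fintype n] {Y : R} {M : Matrix m n R} {g : n → R}

lemma RowsSpanSyzygies.exists_eq_vecMul_add_smul
    (hM : RowsSpanSyzygies (M.map (Ideal.Quotient.mk (Ideal.span {Y})))
      (Ideal.Quotient.mk (Ideal.span {Y}) ∘ g)) {r : n → R} (hr : Y ∣ r ⬝ᵥ g) :
    ∃ k t, r = k ᵥ* M + Y • t := by
  obtain ⟨k, hk⟩ := hM (Ideal.Quotient.mk (Ideal.span {Y}) ∘ r) (by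
    rwa [← RingHom.map_dotProduct, Ideal.Quotient.eq_zero_iff_dvd])
  obtain ⟨k, rfl⟩ := Ideal.Quotient.mk_surjective.comp_left k
  have hdvd (j : n) : Y ∣ r j - (k ᵥ* M) j := by
    rw [← Ideal.Quotient.eq_zero_iff_dvd, map_sub, sub_eq_zero, RingHom.map_vecMul]
    exact (congrFun hk j).symm
  choose t ht using hdvd
  exact ⟨k, t, funext fun j => sub_eq_iff_eq_add'.1 (ht j)⟩

lemma RowsSpanSyzygies.isSMulRegular_quotient (hY : Y ∈ nonZeroDivisors R) (hMg : M *ᵥ g = 0)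
    (hM : RowsSpanSyzygies (M.map (Ideal.Quotient.mk (Ideal.span {Y})))
      (Ideal.Quotient.mk (Ideal.span {Y}) ∘ g)) :
    IsSMulRegular (R ⧸ Ideal.span (Set.range g)) Y := by
  rw [isSMulRegular_quotient_iff_mem_of_smul_mem]
  intro s hs
  obtain ⟨r, hr⟩ := Ideal.mem_span_range_iff_exists_fun.1 hs
  obtain ⟨k, t, rfl⟩ := hM.exists_eq_vecMul_add_smul ⟨s, hr⟩
  change (k ᵥ* M + Y • t) ⬝ᵥ g = Y * s at hr
  rw [add_dotProduct, ← dotProduct_mulVec, hMg, dotProduct_zero, zero_add, smul_dotProduct,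
    smul_eq_mul, mul_cancel_left_mem_nonZeroDivisors hY] at hr
  exact Ideal.mem_span_range_iff_exists_fun.2 ⟨t, hr⟩

theorem RowsSpanSyzygies.of_quotient [IsNoetherianRing R] (hY : Y ∈ nonZeroDivisors R)
    (hjac : Y ∈ Ideal.jacobson (⊥ : Ideal R)) (hMg : M *ᵥ g = 0)
    (hM : RowsSpanSyzygies (M.map (Ideal.Quotient.mk (Ideal.span {Y})))
      (Ideal.Quotient.mk (Ideal.span {Y}) ∘ g)) :
    RowsSpanSyzygies M g := by
  suffices LinearMap.ker (Fintype.linearCombination R g) ≤ LinearMap.range M.vecMulLinear from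
    fun r hr => this hr
  refine Submodule.le_of_le_smul_of_le_jacobson_bot (I := Ideal.span {Y})
    (IsNoetherian.noetherian _) ((Ideal.span_singleton_le_iff_mem _).2 hjac) fun r hr => ?_
  replace hr : r ⬝ᵥ g = 0 := hr
  obtain ⟨k, t, rfl⟩ := hM.exists_eq_vecMul_add_smul (hr ▸ dvd_zero Y)
  rw [add_dotProduct, ← dotProduct_mulVec, hMg, dotProduct_zero, zero_add, smul_dotProduct,
    smul_eq_mul] at hr
  exact Submodule.add_mem_sup ⟨k, rfl⟩ (Submodule.smul_mem_smul
    (Ideal.mem_span_singleton_self Y) (hY.1 _ hr))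

end Lifting

section Minors

variable {R : Type*} [CommRing R]

lemma span_triple_pow_three_le {a b c : R} {L : Ideal R}
    (ha : a ^ 3 ∈ L) (hb : b ^ 3 ∈ L) (hc : c ^ 3 ∈ L)
    (hab : a ^ 2 * b ∈ L) (hac : a ^ 2 * c ∈ L) (hba : a * b ^ 2 ∈ L) (hbc : b ^ 2 * c ∈ L)
    (hca : a * c ^ 2 ∈ L) (hcb : b * c ^ 2 ∈ L) (habc : a * b * c ∈ L) :
    Ideal.span {a, b, c} ^ 3 ≤ L := by
  rw [pow_three, Ideal.span_mul_span', Ideal.span_mul_span', Ideal.span_le]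
  rintro _ ⟨s, hs, _, ⟨t, ht, u, hu, rfl⟩, rfl⟩
  rcases hs with rfl | rfl | rfl <;> rcases ht with rfl | rfl | rfl <;>
    rcases hu with rfl | rfl | rfl <;> ring_nf at * <;> assumption

/-- `a, b, c` are the maximal minors of `!![X, Y, Z; p * Y ^ 2, q * Z ^ 2, X ^ 2]`, and `d, e, f`
are the generators of the third symbolic power modulo the cube. They are the quotients by `X, Y, Z`
of cubic forms in `a, b, c`: for instance, modulo `X` the relations `X * a + Y * b + Z * c = 0` and
`p * Y ^ 2 * a + q * Z ^ 2 * b + X ^ 2 * c = 0` give `Y ^ 2 * (q * b ^ 3 + p * a * c ^ 2) = 0`, and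
`d` is `-(q * b ^ 3 + p * a * c ^ 2) / X`. -/
structure MinorData (X Y Z p q a b c d e f : R) : Prop where
  a_eq : a = q * Z ^ 3 - X ^ 2 * Y
  b_eq : b = X ^ 3 - p * Y ^ 2 * Z
  c_eq : c = p * Y ^ 3 - q * X * Z ^ 2
  d_eq : d = p * X * Y * c ^ 2 + p * q * Z ^ 2 * a * c - q * X ^ 2 * b ^ 2 - p * q * Y * Z * a * b
  e_eq : e = q * X ^ 2 * a * b + p * q * Y * Z * a ^ 2 - p * Y ^ 2 * c ^ 2 - q * X * Z * b * c
  f_eq : f = p * Y ^ 2 * b * c + q * X * Z * b ^ 2 - p * q * Z ^ 2 * a ^ 2 - p * X * Y * a * c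

/-- The generators of the third symbolic power, ordered so that `syzygyMatrix` is upper triangular
modulo `Y`. -/
def cubeGenerators (a b c d e f : R) : Fin 10 → R :=
  ![b ^ 3, d, f, a * b ^ 2, e, a * b * c, a ^ 2 * b, a * c ^ 2, a ^ 2 * c, a ^ 3]

/-- The rows generate the syzygies of `cubeGenerators`. -/
def syzygyMatrix (X Y Z p q : R) : Matrix (Fin 9) (Fin 10) R :=
  !![q, X, 0, 0, 0, 0, 0, p, 0, 0;
    0, Z, X, 0, 0, 0, 0, 0, -2 * p, 0;
    -Y, 0, Z ^ 2, -X, 0, 0, 0, 0, 0, p * Z;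
    0, -Y, 0, 2 * q, -X, 0, 0, 0, 0, 0;
    0, 0, Y * Z, 0, -Z ^ 2, -2 * X, 0, 0, 0, 2 * p * Y;
    0, 0, 0, Y, 0, Z, X, 0, 0, 0;
    0, 0, -Y ^ 2, 0, Y * Z, 0, 2 * q * Z, -2 * X, 0, 0;
    0, 0, 0, 0, 0, Y, 0, Z, X, 0;
    0, 0, 0, 0, 0, 0, Y, 0, Z, X]

lemma syzygyMatrix_map {B : Type*} [CommRing B] (φ : R →+* B) (X Y Z p q : R) :
    (syzygyMatrix X Y Z p q).map φ = syzygyMatrix (φ X) (φ Y) (φ Z) (φ p) (φ q) := by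
  ext i j
  fin_cases i <;> fin_cases j <;> simp [syzygyMatrix, map_ofNat φ 2]

lemma comp_cubeGenerators {B : Type*} [CommRing B] (φ : R →+* B) (a b c d e f : R) :
    φ ∘ cubeGenerators a b c d e f = cubeGenerators (φ a) (φ b) (φ c) (φ d) (φ e) (φ f) := by
  ext i
  fin_cases i <;> simp [cubeGenerators]

namespace MinorData

variable {X Y Z p q a b c d e f : R}

lemma map {B : Type*} [CommRing B] (D : MinorData X Y Z p q a b c d e f) (φ : R →+* B) :
    MinorData (φ X) (φ Y) (φ Z) (φ p) (φ q) (φ a) (φ b) (φ c) (φ d) (φ e) (φ f) := by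
  constructor
  · simp [D.a_eq]
  · simp [D.b_eq]
  · simp [D.c_eq]
  · simp [D.d_eq]
  · simp [D.e_eq]
  · simp [D.f_eq]

variable (D : MinorData X Y Z p q a b c d e f)
include D

lemma syzygy : X * a + Y * b + Z * c = 0 := by
  linear_combination X * D.a_eq + Y * D.b_eq + Z * D.c_eq

lemma X_mul_d : X * d = -(q * b ^ 3 + p * a * c ^ 2) := by
  obtain ⟨rfl, rfl, rfl, rfl, -, -⟩ := D; ring

lemma Y_mul_e : Y * e = -(c ^ 3 + q * a ^ 2 * b) := by
  obtain ⟨rfl, rfl, rfl, -, rfl, -⟩ := D; ring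

lemma Z_mul_f : Z * f = -(p * a ^ 3 + b ^ 2 * c) := by
  obtain ⟨rfl, rfl, rfl, -, -, rfl⟩ := D; ring

lemma Y_mul_d_add_X_mul_e : Y * d + X * e = 2 * q * a * b ^ 2 := by
  obtain ⟨rfl, rfl, rfl, rfl, rfl, -⟩ := D; ring

lemma Z_mul_d_add_X_mul_f : Z * d + X * f = 2 * p * a ^ 2 * c := by
  obtain ⟨rfl, rfl, rfl, rfl, -, rfl⟩ := D; ring

lemma Z_mul_e_add_Y_mul_f : Z * e + Y * f = 2 * b * c ^ 2 := by
  obtain ⟨rfl, rfl, rfl, -, rfl, rfl⟩ := D; ring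

lemma syzygyMatrix_mulVec_cubeGenerators :
    syzygyMatrix X Y Z p q *ᵥ cubeGenerators a b c d e f = 0 := by
  ext i
  simp only [mulVec, dotProduct, Fin.sum_univ_succ, syzygyMatrix, cubeGenerators]
  fin_cases i <;> simp
  · linear_combination D.X_mul_d
  · linear_combination D.Z_mul_d_add_X_mul_f
  · linear_combination Z * D.Z_mul_f - b ^ 2 * D.syzygy
  · linear_combination -D.Y_mul_d_add_X_mul_e
  · linear_combination 2 * Y * D.Z_mul_f - Z * D.Z_mul_e_add_Y_mul_f - 2 * b * c * D.syzygy
  · linear_combination a * b * D.syzygy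
  · linear_combination 2 * Z * D.Y_mul_e - Y * D.Z_mul_e_add_Y_mul_f - 2 * c ^ 2 * D.syzygy
  · linear_combination a * c * D.syzygy
  · linear_combination a ^ 2 * D.syzygy

omit D in
lemma cubeGenerators_eq_of_Y_eq_zero (D : MinorData X 0 Z p q a b c d e f) :
    cubeGenerators a b c d e f =
      ![X ^ 9, -X ^ 8 * q - p * q ^ 3 * X * Z ^ 7, X ^ 7 * q * Z - p * q ^ 3 * Z ^ 8,
        X ^ 6 * q * Z ^ 3, 2 * X ^ 5 * q ^ 2 * Z ^ 3, -X ^ 4 * q ^ 2 * Z ^ 5, X ^ 3 * q ^ 2 * Z ^ 6,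
        X ^ 2 * q ^ 3 * Z ^ 7, -X * q ^ 3 * Z ^ 8, q ^ 3 * Z ^ 9] := by
  obtain ⟨rfl, rfl, rfl, rfl, rfl, rfl⟩ := D
  ext i
  fin_cases i <;> simp [cubeGenerators] <;> ring

omit D in
lemma rowsSpanSyzygies_of_Y_eq_zero (D : MinorData X 0 Z p q a b c d e f) (h2 : IsUnit (2 : R))
    (hqZ : q * Z ∈ regularBefore X) :
    RowsSpanSyzygies (syzygyMatrix X 0 Z p q) (cubeGenerators a b c d e f) := by
  let u : Fin 10 → R := fun i =>
    q ^ (![0, 1, 1, 1, 2, 2, 2, 3, 3, 3] i) * Z ^ (![0, 0, 1, 3, 3, 5, 6, 7, 8, 9] i)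
  have hu (i : Fin 10) : u i ∈ regularBefore X :=
    mul_mem (pow_mem (mem_regularBefore_of_dvd hqZ (dvd_mul_right q Z)) _)
      (pow_mem (mem_regularBefore_of_dvd hqZ (dvd_mul_left Z q)) _)
  refine rowsSpanSyzygies_of_staircase D.syzygyMatrix_mulVec_cubeGenerators ?_ hu ?_ ?_ ?_
  · simp [Fin.forall_fin_succ, syzygyMatrix]
  · obtain ⟨h, hh⟩ := h2.exists_left_inv
    intro i
    refine ⟨![1, 1, 1, h, -1, 1, h, 1, 1] i, ?_⟩
    fin_cases i <;> simp [u, syzygyMatrix] <;> grind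
  · intro i
    refine ⟨![1, -1, 1, 1, 2, -1, 1, 1, -1] i, 9 - i, ?_,
      ![0, -(p * q ^ 2 * X * Z ^ 6), -(p * q ^ 2 * Z ^ 5), 0, 0, 0, 0, 0, 0] i, ?_⟩
    · fin_cases i <;> simp [h2]
    · rw [D.cubeGenerators_eq_of_Y_eq_zero]
      fin_cases i <;> simp [u] <;> ring
  · rw [D.cubeGenerators_eq_of_Y_eq_zero]
    rfl

end MinorData

end Minors

section Cube

variable {R : Type*} [CommRing R]

lemma mem_symmProducts_triple {X Y Z : R} {r : Fin 3 → R} :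
    r ∈ symmProducts ![X, Y, Z] ↔ ∃ s₀₀ s₀₁ s₀₂ s₁₁ s₁₂ s₂₂ : R,
      r = ![s₀₀ * X + s₀₁ * Y + s₀₂ * Z, s₀₁ * X + s₁₁ * Y + s₁₂ * Z,
        s₀₂ * X + s₁₂ * Y + s₂₂ * Z] := by
  constructor
  · rintro ⟨S, hS, rfl⟩
    refine ⟨S 0 0, S 0 1, S 0 2, S 1 1, S 1 2, S 2 2, funext fun i => ?_⟩
    fin_cases i <;>
      simp [mulVec, dotProduct, Fin.sum_univ_three, hS.apply 0 1, hS.apply 0 2, hS.apply 1 2]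
  · rintro ⟨s₀₀, s₀₁, s₀₂, s₁₁, s₁₂, s₂₂, rfl⟩
    refine ⟨!![s₀₀, s₀₁, s₀₂; s₀₁, s₁₁, s₁₂; s₀₂, s₁₂, s₂₂], ?_, ?_⟩
    · ext i j
      fin_cases i <;> fin_cases j <;> rfl
    · ext i
      fin_cases i <;> simp [mulVec, dotProduct, Fin.sum_univ_three]

/-- The vectors whose coefficients of `d, e, f` in `cubeGenerators` form a vector in
`symmProducts ![X, Y, Z]`. These are the combinations of `cubeGenerators` that lie in the cube of
the ideal of minors. -/
def cubeCoefficients (X Y Z : R) : Submodule R (Fin 10 → R) :=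
  (symmProducts ![X, Y, Z]).comap (LinearMap.funLeft R R ![1, 4, 2])

variable {X Y Z : R}

lemma mem_cubeCoefficients {t : Fin 10 → R} :
    t ∈ cubeCoefficients X Y Z ↔ ![t 1, t 4, t 2] ∈ symmProducts ![X, Y, Z] := by
  rw [cubeCoefficients, Submodule.mem_comap]
  congr! 1
  ext i
  fin_cases i <;> rfl

lemma syzygyMatrix_row_mem_cubeCoefficients (X Y Z p q : R) (i : Fin 9) :
    syzygyMatrix X Y Z p q i ∈ cubeCoefficients X Y Z := by
  rw [mem_cubeCoefficients, mem_symmProducts_triple]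
  refine ⟨![1, 0, 0, 0, 0, 0, 0, 0, 0] i, ![0, 0, 0, -1, 0, 0, 0, 0, 0] i,
    ![0, 1, 0, 0, 0, 0, 0, 0, 0] i,
    ![0, 0, 0, 0, 0, 0, 2 * Z, 0, 0] i, ![0, 0, 0, 0, -Z, 0, -Y, 0, 0] i,
    ![0, 0, Z, 0, 2 * Y, 0, 0, 0, 0] i, ?_⟩
  fin_cases i <;> simp [syzygyMatrix] <;> grind

lemma mem_cubeCoefficients_of_dotProduct_eq_zero {p q : R} {g t : Fin 10 → R}
    (h : RowsSpanSyzygies (syzygyMatrix X Y Z p q) g) (ht : t ⬝ᵥ g = 0) :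
    t ∈ cubeCoefficients X Y Z := by
  obtain ⟨k, rfl⟩ := h t ht
  rw [vecMul_eq_sum]
  exact sum_mem fun i _ =>
    Submodule.smul_mem _ _ (syzygyMatrix_row_mem_cubeCoefficients X Y Z p q i)

lemma span_sq_smul_top_le_cubeCoefficients (h2 : IsUnit (2 : R)) :
    Ideal.span (Set.range ![X, Y, Z]) ^ 2 • ⊤ ≤ cubeCoefficients X Y Z := by
  rw [cubeCoefficients, ← Submodule.map_le_iff_le_comap, Submodule.map_smul'']
  exact (Submodule.smul_mono le_rfl le_top).trans (span_range_sq_smul_top_le_symmProducts h2 _)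

lemma length_quotient_cubeCoefficients :
    Module.length R ((Fin 10 → R) ⧸ cubeCoefficients X Y Z) =
      Module.length R ((Fin 3 → R) ⧸ symmProducts ![X, Y, Z]) := by
  let π : (Fin 10 → R) →ₗ[R] (Fin 3 → R) := LinearMap.funLeft R R ![1, 4, 2]
  have hπ : LinearMap.range π = ⊤ :=
    LinearMap.range_eq_top.2 (LinearMap.funLeft_surjective_of_injective R R _ (by decide))
  rw [length_quotient_eq_add_sup_range π, hπ, sup_top_eq,
    Module.length_eq_zero (M := (Fin 3 → R) ⧸ (⊤ : Submodule R (Fin 3 → R))), add_zero]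
  rfl

lemma pow_mul_pow_mul_pow_mem_span_pow {a b c : R} {i j k n : ℕ} (h : i + j + k = n) :
    a ^ i * b ^ j * c ^ k ∈ Ideal.span {a, b, c} ^ n := by
  rw [← h, pow_add, pow_add]
  exact Ideal.mul_mem_mul (Ideal.mul_mem_mul
    (Ideal.pow_mem_pow (Ideal.subset_span (by simp)) i)
    (Ideal.pow_mem_pow (Ideal.subset_span (by simp)) j))
    (Ideal.pow_mem_pow (Ideal.subset_span (by simp)) k)

lemma dotProduct_cubeGenerators (a b c d e f : R) (t : Fin 10 → R) :
    t ⬝ᵥ cubeGenerators a b c d e f = t 0 * b ^ 3 + t 1 * d + t 2 * f + t 3 * (a * b ^ 2) + t 4 * e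
      + t 5 * (a * b * c) + t 6 * (a ^ 2 * b) + t 7 * (a * c ^ 2) + t 8 * (a ^ 2 * c)
      + t 9 * a ^ 3 := by
  simp [dotProduct, Fin.sum_univ_succ, cubeGenerators]
  ring

namespace MinorData

variable {p q a b c d e f : R} (D : MinorData X Y Z p q a b c d e f)
include D

lemma mul_add_mul_add_mul_mem_span_pow_three {r : Fin 3 → R}
    (hr : r ∈ symmProducts ![X, Y, Z]) :
    r 0 * d + r 1 * e + r 2 * f ∈ Ideal.span {a, b, c} ^ 3 := by
  obtain ⟨s₀₀, s₀₁, s₀₂, s₁₁, s₁₂, s₂₂, rfl⟩ := mem_symmProducts_triple.1 hr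
  have hmem (i j k : ℕ) (h : i + j + k = 3) (r : R) :
      r * (a ^ i * b ^ j * c ^ k) ∈ Ideal.span {a, b, c} ^ 3 :=
    Ideal.mul_mem_left _ r (pow_mul_pow_mul_pow_mem_span_pow h)
  convert add_mem (add_mem
    (add_mem (hmem 0 3 0 rfl (-(s₀₀ * q))) (hmem 1 0 2 rfl (-(s₀₀ * p))))
    (add_mem (hmem 0 0 3 rfl (-s₁₁)) (hmem 2 1 0 rfl (-(s₁₁ * q)))))
    (add_mem (add_mem (hmem 3 0 0 rfl (-(s₂₂ * p))) (hmem 0 2 1 rfl (-s₂₂)))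
      (add_mem (add_mem (hmem 1 2 0 rfl (s₀₁ * 2 * q)) (hmem 2 0 1 rfl (s₀₂ * 2 * p)))
        (hmem 0 1 2 rfl (s₁₂ * 2)))) using 1
  simp only [cons_val]
  linear_combination s₀₀ * D.X_mul_d + s₁₁ * D.Y_mul_e + s₂₂ * D.Z_mul_f
    + s₀₁ * D.Y_mul_d_add_X_mul_e + s₀₂ * D.Z_mul_d_add_X_mul_f + s₁₂ * D.Z_mul_e_add_Y_mul_f

lemma dotProduct_cubeGenerators_mem_span_pow_three {t : Fin 10 → R}
    (ht : t ∈ cubeCoefficients X Y Z) :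
    t ⬝ᵥ cubeGenerators a b c d e f ∈ Ideal.span {a, b, c} ^ 3 := by
  have hmem (i j k : ℕ) (h : i + j + k = 3) (r : R) :
      r * (a ^ i * b ^ j * c ^ k) ∈ Ideal.span {a, b, c} ^ 3 :=
    Ideal.mul_mem_left _ r (pow_mul_pow_mul_pow_mem_span_pow h)
  convert add_mem (D.mul_add_mul_add_mul_mem_span_pow_three (mem_cubeCoefficients.1 ht)) <|
    add_mem
      (add_mem (add_mem (hmem 3 0 0 rfl (t 9)) (hmem 0 3 0 rfl (t 0)))
        (add_mem (hmem 2 1 0 rfl (t 6)) (hmem 2 0 1 rfl (t 8))))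
      (add_mem (add_mem (hmem 1 2 0 rfl (t 3)) (hmem 1 0 2 rfl (t 7)))
        (hmem 1 1 1 rfl (t 5))) using 1
  rw [dotProduct_cubeGenerators]
  simp only [cons_val]
  ring

lemma span_pow_three_eq_map_cubeCoefficients (h2 : IsUnit (2 : R)) :
    Ideal.span {a, b, c} ^ 3 = (cubeCoefficients X Y Z).map
      (Fintype.linearCombination R (cubeGenerators a b c d e f)) := by
  refine le_antisymm ?_ (Submodule.map_le_iff_le_comap.2 fun t ht =>
    D.dotProduct_cubeGenerators_mem_span_pow_three ht)
  have hsingle (i : Fin 10) (hi : ∀ j, (![1, 4, 2] : Fin 3 → Fin 10) j ≠ i) :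
      cubeGenerators a b c d e f i ∈ (cubeCoefficients X Y Z).map
        (Fintype.linearCombination R (cubeGenerators a b c d e f)) := by
    have hzero : LinearMap.funLeft R R (![1, 4, 2] : Fin 3 → Fin 10) (Pi.single i 1) = 0 :=
      funext fun j => Pi.single_eq_of_ne (M := fun _ => R) (hi j) 1
    exact ⟨Pi.single i 1, Submodule.mem_comap.2 (hzero ▸ zero_mem _), by simp⟩
  have hcomb {u : R} (s₁₁ s₁₂ s₂₂ t₆ t₉ : R)
      (h : (s₁₁ * Y + s₁₂ * Z) * e + (s₁₂ * Y + s₂₂ * Z) * f + t₆ * (a ^ 2 * b) + t₉ * a ^ 3 = u) :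
      u ∈ (cubeCoefficients X Y Z).map
        (Fintype.linearCombination R (cubeGenerators a b c d e f)) := by
    refine ⟨![0, 0, s₁₂ * Y + s₂₂ * Z, 0, s₁₁ * Y + s₁₂ * Z, 0, t₆, 0, 0, t₉],
      mem_cubeCoefficients.2 (mem_symmProducts_triple.2 ⟨0, 0, 0, s₁₁, s₁₂, s₂₂, by simp⟩), ?_⟩
    refine (dotProduct_cubeGenerators a b c d e f _).trans ?_
    simp only [cons_val]
    linear_combination h
  obtain ⟨h, hh⟩ := h2.exists_left_inv
  refine span_triple_pow_three_le (hsingle 9 (by decide)) (hsingle 0 (by decide))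
    (hcomb (-1) 0 0 (-q) 0 ?_) (hsingle 6 (by decide)) (hsingle 8 (by decide))
    (hsingle 3 (by decide)) (hcomb 0 0 (-1) 0 (-p) ?_) (hsingle 7 (by decide))
    (hcomb 0 h 0 0 0 ?_) (hsingle 5 (by decide))
  · linear_combination -D.Y_mul_e
  · linear_combination -D.Z_mul_f
  · linear_combination h * D.Z_mul_e_add_Y_mul_f + b * c ^ 2 * hh

end MinorData

end Cube

section Symbolic

variable {R : Type*} [CommRing R]

lemma colon_eq_of_isSMulRegular {A K Q : Ideal R} {y : R} (hAK : A ≤ K) (hQK : Q * K ≤ A)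
    (hyQ : y ∈ Q) (hy : IsSMulRegular (R ⧸ K) y) :
    Submodule.colon (A : Submodule R R) (Q : Submodule R R) = K := by
  refine le_antisymm (fun s hs => ?_) fun s hs => Submodule.mem_colon.2 fun r hr => ?_
  · refine mem_of_isSMulRegular_quotient_of_smul_mem hy (hAK ?_)
    simpa only [smul_eq_mul, mul_comm] using Submodule.mem_colon.1 hs y hyQ
  · simpa only [smul_eq_mul, mul_comm] using hQK (Ideal.mul_mem_mul hr hs)

lemma mem_symbolicPower {I : Ideal R} {n : ℕ} {s : R} :
    s ∈ symbolicPower I n ↔ ∀ P ∈ I.minimalPrimes, ∃ t ∉ P, t * s ∈ I ^ n := by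
  simp only [symbolicPower, Submodule.mem_iInf, Subtype.forall]
  refine forall₂_congr fun P hP => ?_
  have : P.IsPrime := hP.isPrime
  rw [Ideal.mem_comap, IsLocalization.algebraMap_mem_map_algebraMap_iff P.primeCompl]
  rfl

variable [IsLocalRing R] {I K P : Ideal R} {y : R} {n : ℕ}

lemma eq_maximalIdeal_of_radical_le (hI : maximalIdeal R ≤ I.radical) (hP : P.IsPrime)
    (hIP : I ≤ P) : P = maximalIdeal R :=
  le_antisymm (le_maximalIdeal_of_isPrime P) (hI.trans (hP.radical_le_iff.2 hIP))

lemma mem_minimalPrimes_of_notMem [IsNoetherianRing R] (hym : y ∈ maximalIdeal R)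
    (hI : maximalIdeal R ≤ (I ⊔ Ideal.span {y}).radical) [hP : P.IsPrime] (hIP : I ≤ P)
    (hyP : y ∉ P) : P ∈ I.minimalPrimes := by
  obtain ⟨P₀, hP₀, hle⟩ := Ideal.exists_minimalPrimes_le hIP
  rcases hle.eq_or_lt with rfl | hlt
  · exact hP₀
  have hPm : P < maximalIdeal R :=
    lt_of_le_of_ne (le_maximalIdeal_of_isPrime P) fun h => hyP (h ▸ hym)
  obtain ⟨q, hyq, hP₀q, hqm⟩ := PrimeSpectrum.exist_mem_one_of_mem_maximal_ideal
    (p₀ := ⟨P₀, hP₀.isPrime⟩) (p₁ := ⟨P, hP⟩) hlt hPm hym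
  refine absurd (eq_maximalIdeal_of_radical_le hI q.isPrime (sup_le (hP₀.le.trans ?_) ?_)) hqm.ne
  · exact hP₀q.le
  · exact (Ideal.span_singleton_le_iff_mem _).2 hyq

lemma symbolicPower_le_of_isSMulRegular [IsNoetherianRing R] (hym : y ∈ maximalIdeal R)
    (hI : maximalIdeal R ≤ (I ⊔ Ideal.span {y}).radical) (hIK : I ^ n ≤ K)
    (hy : IsSMulRegular (R ⧸ K) y) : symbolicPower I n ≤ K := by
  intro s hs
  suffices y ∈ (Submodule.colon (K : Submodule R R) {s}).radical by
    obtain ⟨N, hN⟩ := this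
    exact mem_of_isSMulRegular_quotient_of_smul_mem (hy.pow N) (Submodule.mem_colon_singleton.1 hN)
  rw [Ideal.radical_eq_sInf, Submodule.mem_sInf]
  rintro P ⟨hKP, hP⟩
  by_contra hyP
  have hIP : I ≤ P := hP.le_of_pow_le <| (hIK.trans fun t ht =>
    Submodule.mem_colon_singleton.2 (K.mul_mem_right s ht)).trans hKP
  obtain ⟨t, ht, hts⟩ := mem_symbolicPower.1 hs P (mem_minimalPrimes_of_notMem hym hI hIP hyP)
  exact ht (hKP (Submodule.mem_colon_singleton.2 (hIK hts)))

lemma notMem_of_mem_minimalPrimes_of_isSMulRegular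
    (hI : maximalIdeal R ≤ (I ⊔ Ideal.span {y}).radical) (hK : K ≠ ⊤) (hIK : I ^ n ≤ K)
    (hy : IsSMulRegular (R ⧸ K) y) (hP : P ∈ I.minimalPrimes) : y ∉ P := by
  intro hyP
  have hPm := eq_maximalIdeal_of_radical_le hI hP.isPrime
    (sup_le hP.le ((Ideal.span_singleton_le_iff_mem _).2 hyP))
  have hyI : y ∈ I.radical := by
    rw [Ideal.radical_eq_sInf, Submodule.mem_sInf]
    rintro P' ⟨hIP', hP'⟩
    exact hP.2 ⟨hP', hIP'⟩ (hPm ▸ le_maximalIdeal_of_isPrime P') hyP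
  obtain ⟨N, hN⟩ := hyI
  refine hK ((Ideal.eq_top_iff_one K).2 ?_)
  refine mem_of_isSMulRegular_quotient_of_smul_mem ((hy.pow N).pow n) (hIK ?_)
  simpa using Ideal.pow_mem_pow hN n

/-- The primes over `I` are its minimal primes, which avoid `y`, and the maximal ideal; so `I⁽ⁿ⁾` is
the saturation of `I ^ n` with respect to `y`. -/
theorem symbolicPower_eq_of_isSMulRegular [IsNoetherianRing R] {N : ℕ} (hym : y ∈ maximalIdeal R)
    (hI : maximalIdeal R ≤ (I ⊔ Ideal.span {y}).radical) (hK : K ≠ ⊤) (hIK : I ^ n ≤ K)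
    (hKI : ∀ s ∈ K, y ^ N * s ∈ I ^ n) (hy : IsSMulRegular (R ⧸ K) y) :
    symbolicPower I n = K := by
  refine le_antisymm (symbolicPower_le_of_isSMulRegular hym hI hIK hy) fun s hs =>
    mem_symbolicPower.2 fun P hP => ⟨y ^ N, fun h => ?_, hKI s hs⟩
  exact notMem_of_mem_minimalPrimes_of_isSMulRegular hI hK hIK hy hP (hP.isPrime.mem_of_pow_mem N h)

end Symbolic

section FiniteLength

variable {R : Type*} [CommRing R]

lemma hasLength_iff {M : Type*} [AddCommGroup M] [Module R M] {n : ℕ} :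
    HasLength R M n ↔ Module.length R M = n := by
  constructor
  · rintro ⟨s, h₀, h₁, rfl⟩
    exact (Module.length_compositionSeries s h₀ h₁).symm
  · intro h
    obtain ⟨s, h₀, h₁⟩ := isFiniteLength_iff_exists_compositionSeries.1
      (Module.length_ne_top_iff.1 (h ▸ ENat.natCast_ne_top n))
    rw [← Module.length_compositionSeries s h₀ h₁] at h
    exact ⟨s, h₀, h₁, by exact_mod_cast h⟩

lemma length_quotient_ne_top [IsNoetherianRing R] [IsLocalRing R] {Q : Ideal R}
    (hQ : maximalIdeal R ≤ Q.radical) : Module.length R (R ⧸ Q) ≠ ⊤ := by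
  rcases eq_or_ne Q ⊤ with rfl | hQtop
  · rw [Module.length_eq_zero (M := R ⧸ (⊤ : Ideal R))]
    exact ENat.zero_ne_top
  have hmin : maximalIdeal R ∈ Q.minimalPrimes :=
    ⟨⟨inferInstance, le_maximalIdeal hQtop⟩,
      fun P hP _ => (eq_maximalIdeal_of_radical_le hQ hP.1 hP.2).ge⟩
  have : IsArtinianRing (R ⧸ Q) := quotient_artinian_of_mem_minimalPrimes_of_isLocalRing Q hmin
  have : IsArtinian R (R ⧸ Q) :=
    isArtinian_of_surjective_algebraMap (Ideal.Quotient.mk_surjective (I := Q))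
  rw [Module.length_ne_top_iff, isFiniteLength_iff_isNoetherian_isArtinian]
  exact ⟨inferInstance, inferInstance⟩

end FiniteLength

section Parameters

variable {R : Type*} [CommRing R] {X Y Z : R}

lemma mem_nonZeroDivisors_of_isWeaklyRegular {u : R} {l : List R}
    (h : RingTheory.Sequence.IsWeaklyRegular R (u :: l)) : u ∈ nonZeroDivisors R := by
  rw [RingTheory.Sequence.isWeaklyRegular_cons_iff] at h
  exact mem_nonZeroDivisors_iff_right.2 fun r hr =>
    h.1.right_eq_zero_of_smul (by rwa [smul_eq_mul, mul_comm])

lemma mem_regularBefore_of_isWeaklyRegular {u v w : R}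
    (h : RingTheory.Sequence.IsWeaklyRegular R [u, v, w]) :
    Ideal.Quotient.mk (Ideal.span {u}) v ∈
      regularBefore (Ideal.Quotient.mk (Ideal.span {u}) w) := by
  have hreg := (RingTheory.Sequence.isWeaklyRegular_iff _ _).1 h
  have mem_iff (s : R) : Ideal.Quotient.mk (Ideal.span {u}) v ∣ Ideal.Quotient.mk _ s ↔
      s ∈ Ideal.span {u, v} := by
    rw [← Ideal.mem_span_singleton, ← Set.image_singleton, ← Ideal.map_span,
      Ideal.mem_quotient_iff_mem_sup, sup_comm, ← Ideal.span_insert]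
  refine ⟨mem_nonZeroDivisors_iff_right.2 fun r hr => ?_, fun r hr => ?_⟩ <;>
    obtain ⟨r, rfl⟩ := Ideal.Quotient.mk_surjective r
  · rw [← map_mul, Ideal.Quotient.eq_zero_iff_mem, mul_comm] at hr
    have hv := mem_of_isSMulRegular_quotient_of_smul_mem (hreg 1 (by simp)) (x := r)
    simp only [List.take, Ideal.ofList_singleton, smul_eq_mul, Ideal.mul_top] at hv
    exact Ideal.Quotient.eq_zero_iff_mem.2 (hv hr)
  · rw [← map_mul, mem_iff] at hr
    have hw := mem_of_isSMulRegular_quotient_of_smul_mem (hreg 2 (by simp)) (x := r)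
    simp only [List.take, Ideal.ofList_cons, Ideal.ofList_nil, sup_bot_eq, smul_eq_mul,
      Ideal.mul_top, ← Ideal.span_insert] at hw
    exact (mem_iff r).2 (hw hr)

lemma mem_span_range_of_dotProduct_eq_zero (hY : Y ∈ nonZeroDivisors R)
    (hZ : Ideal.Quotient.mk (Ideal.span {Y}) Z ∈
      regularBefore (Ideal.Quotient.mk (Ideal.span {Y}) X)) {r : Fin 3 → R}
    (hr : r ⬝ᵥ ![X, Y, Z] = 0) (i : Fin 3) : r i ∈ Ideal.span (Set.range ![X, Y, Z]) := by
  have hr : r 0 * X + r 1 * Y + r 2 * Z = 0 := by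
    simpa [dotProduct, Fin.sum_univ_three] using hr
  obtain ⟨⟨u⟩, hu⟩ := hZ.2 (Ideal.Quotient.mk _ (r 0)) ⟨Ideal.Quotient.mk _ (-r 2), by
    rw [← map_mul, ← map_mul, Ideal.Quotient.eq, Ideal.mem_span_singleton]
    exact ⟨-r 1, by linear_combination hr⟩⟩
  obtain ⟨v, hv⟩ : Y ∣ r 0 - Z * u :=
    Ideal.mem_span_singleton.1 (Ideal.Quotient.eq.1 hu)
  obtain ⟨w, hw⟩ : Y ∣ r 2 + u * X := by
    rw [← Ideal.Quotient.eq_zero_iff_dvd]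
    refine hZ.1.2 _ ?_
    rw [← map_mul, Ideal.Quotient.eq_zero_iff_dvd]
    exact ⟨-r 1 - v * X, by linear_combination hr - X * hv⟩
  have h1 : r 1 + v * X + w * Z = 0 :=
    hY.2 _ (by linear_combination hr - X * hv - Z * hw)
  rw [Ideal.mem_span_range_iff_exists_fun]
  simp only [Fin.sum_univ_three, cons_val]
  fin_cases i
  · exact ⟨![0, v, u], by simp; linear_combination -hv⟩
  · exact ⟨![-v, 0, -w], by simp; linear_combination -h1⟩
  · exact ⟨![-u, w, 0], by simp; linear_combination -hw⟩

lemma span_range_triple (X Y Z : R) :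
    Ideal.span (Set.range ![X, Y, Z]) = Ideal.span {X, Y, Z} := by
  simp only [range_cons, range_empty, Set.union_empty, Set.singleton_union]

lemma radical_span_triple_pow (x y z : R) {i j k : ℕ} (hi : i ≠ 0)
    (hj : j ≠ 0) (hk : k ≠ 0) :
    (Ideal.span {x ^ i, y ^ j, z ^ k}).radical = (Ideal.span {x, y, z}).radical := by
  refine le_antisymm (Ideal.radical_mono (Ideal.span_le.2 ?_))
    (Ideal.radical_le_radical_iff.2 (Ideal.span_le.2 ?_))
  · rintro _ (rfl | rfl | rfl)
    · exact Ideal.pow_mem_of_mem _ (Ideal.subset_span (by simp)) i hi.bot_lt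
    · exact Ideal.pow_mem_of_mem _ (Ideal.subset_span (by simp)) j hj.bot_lt
    · exact Ideal.pow_mem_of_mem _ (Ideal.subset_span (by simp)) k hk.bot_lt
  · rintro _ (rfl | rfl | rfl)
    · exact ⟨i, Ideal.subset_span (by simp)⟩
    · exact ⟨j, Ideal.subset_span (by simp)⟩
    · exact ⟨k, Ideal.subset_span (by simp)⟩

end Parameters

section SymbolicCube

variable {R : Type*} [CommRing R] {X Y Z p q a b c d e f : R}

namespace MinorData

variable (D : MinorData X Y Z p q a b c d e f)
include D

lemma rowsSpanSyzygies_map {B : Type*} [CommRing B] (φ : R →+* B) (hY : φ Y = 0)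
    (h2 : IsUnit (2 : R)) (hqZ : φ (q * Z) ∈ regularBefore (φ X)) :
    RowsSpanSyzygies ((syzygyMatrix X Y Z p q).map φ) (φ ∘ cubeGenerators a b c d e f) := by
  have D' := D.map φ
  rw [hY] at D'
  rw [syzygyMatrix_map, comp_cubeGenerators, hY]
  exact D'.rowsSpanSyzygies_of_Y_eq_zero (map_ofNat φ 2 ▸ h2.map φ) (map_mul φ q Z ▸ hqZ)

lemma span_pow_three_le_span_cubeGenerators (h2 : IsUnit (2 : R)) :
    Ideal.span {a, b, c} ^ 3 ≤ Ideal.span (Set.range (cubeGenerators a b c d e f)) := by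
  rw [D.span_pow_three_eq_map_cubeCoefficients h2]
  exact LinearMap.map_le_range.trans_eq (Fintype.range_linearCombination R _)

lemma span_sq_mul_span_cubeGenerators_le (h2 : IsUnit (2 : R)) :
    Ideal.span {X, Y, Z} ^ 2 * Ideal.span (Set.range (cubeGenerators a b c d e f)) ≤
      Ideal.span {a, b, c} ^ 3 := by
  have hrange : Ideal.span (Set.range (cubeGenerators a b c d e f)) =
      Submodule.map (Fintype.linearCombination R (cubeGenerators a b c d e f)) ⊤ :=
    (Fintype.range_linearCombination R _).symm.trans (LinearMap.range_eq_map _)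
  rw [D.span_pow_three_eq_map_cubeCoefficients h2, ← smul_eq_mul, hrange,
    ← Submodule.map_smul'', ← span_range_triple]
  exact Submodule.map_mono (span_sq_smul_top_le_cubeCoefficients h2)

lemma span_cubeGenerators_le_span :
    Ideal.span (Set.range (cubeGenerators a b c d e f)) ≤ Ideal.span {a, b, c} := by
  have hzero (s : R) (hs : s ∈ ({a, b, c} : Set R)) :
      Ideal.Quotient.mk (Ideal.span {a, b, c}) s = 0 :=
    Ideal.Quotient.eq_zero_iff_mem.2 (Ideal.subset_span hs)
  rw [Ideal.span_le]
  rintro _ ⟨i, rfl⟩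
  refine Ideal.Quotient.eq_zero_iff_mem.1 ?_
  fin_cases i <;>
    simp [cubeGenerators, D.d_eq, D.e_eq, D.f_eq, hzero a (by simp), hzero b (by simp),
      hzero c (by simp)]

lemma span_le_radical_span_sup :
    Ideal.span {Y, q * Z, X} ≤ (Ideal.span {a, b, c} ⊔ Ideal.span {Y}).radical := by
  have ha : a ∈ Ideal.span {a, b, c} ⊔ Ideal.span {Y} :=
    Ideal.mem_sup_left (Ideal.subset_span (by simp))
  have hb : b ∈ Ideal.span {a, b, c} ⊔ Ideal.span {Y} :=
    Ideal.mem_sup_left (Ideal.subset_span (by simp))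
  have hY : Y ∈ Ideal.span {a, b, c} ⊔ Ideal.span {Y} :=
    Ideal.mem_sup_right (Ideal.mem_span_singleton_self Y)
  rw [Ideal.span_le]
  rintro _ (rfl | rfl | rfl)
  · exact Ideal.le_radical hY
  · refine ⟨3, ?_⟩
    convert add_mem (Ideal.mul_mem_left _ (q ^ 2) ha) (Ideal.mul_mem_left _ (q ^ 2 * X ^ 2) hY)
      using 1
    rw [D.a_eq]
    ring
  · refine ⟨3, ?_⟩
    convert add_mem hb (Ideal.mul_mem_left _ (p * Y * Z) hY) using 1
    rw [D.b_eq]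
    ring

lemma span_minors_le_span : Ideal.span {a, b, c} ≤ Ideal.span {Y, q * Z, X} := by
  rw [Ideal.span_le]
  rintro _ (rfl | rfl | rfl) <;> refine Submodule.mem_span_triple.2 ?_
  · exact ⟨-X ^ 2, Z ^ 2, 0, by simp only [D.a_eq, smul_eq_mul]; ring⟩
  · exact ⟨-p * Y * Z, 0, X ^ 2, by simp only [D.b_eq, smul_eq_mul]; ring⟩
  · exact ⟨p * Y ^ 2, -X * Z, 0, by simp only [D.c_eq, smul_eq_mul]; ring⟩

lemma comap_span_pow_three (h2 : IsUnit (2 : R))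
    (hM : RowsSpanSyzygies (syzygyMatrix X Y Z p q) (cubeGenerators a b c d e f)) :
    Submodule.comap (Fintype.linearCombination R (cubeGenerators a b c d e f))
      (Ideal.span {a, b, c} ^ 3) = cubeCoefficients X Y Z := by
  rw [D.span_pow_three_eq_map_cubeCoefficients h2, Submodule.comap_map_eq]
  exact sup_eq_left.2 fun t ht => mem_cubeCoefficients_of_dotProduct_eq_zero hM ht

theorem length_span_cubeGenerators_quotient (h2 : IsUnit (2 : R))
    (hM : RowsSpanSyzygies (syzygyMatrix X Y Z p q) (cubeGenerators a b c d e f))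
    (hQ : ∀ r, r ⬝ᵥ ![X, Y, Z] = 0 → ∀ i, r i ∈ Ideal.span (Set.range ![X, Y, Z])) :
    Module.length R (↥(Ideal.span (Set.range (cubeGenerators a b c d e f))) ⧸
        Submodule.comap (Ideal.span (Set.range (cubeGenerators a b c d e f))).subtype
          (Ideal.span {a, b, c} ^ 3 : Ideal R)) =
      6 * Module.length R (R ⧸ Ideal.span (Set.range ![X, Y, Z])) := by
  have hlen := length_sup_range_quotient
    (Fintype.linearCombination R (cubeGenerators a b c d e f)) (Ideal.span {a, b, c} ^ 3)
  rw [Fintype.range_linearCombination, ← Ideal.span,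
    sup_eq_right.2 (D.span_pow_three_le_span_cubeGenerators h2)] at hlen
  rw [hlen, D.comap_span_pow_three h2 hM, length_quotient_cubeCoefficients,
    length_quotient_symmProducts h2 hQ]

section WeaklyRegular

variable (hreg : RingTheory.Sequence.IsWeaklyRegular R [Y, q * Z, X]) (h2 : IsUnit (2 : R))
include hreg h2

lemma rowsSpanSyzygies_mk :
    RowsSpanSyzygies ((syzygyMatrix X Y Z p q).map (Ideal.Quotient.mk (Ideal.span {Y})))
      (Ideal.Quotient.mk (Ideal.span {Y}) ∘ cubeGenerators a b c d e f) :=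
  D.rowsSpanSyzygies_map _ (Ideal.Quotient.mk_singleton_self Y) h2
    (mem_regularBefore_of_isWeaklyRegular hreg)

lemma isSMulRegular_quotient_span_cubeGenerators :
    IsSMulRegular (R ⧸ Ideal.span (Set.range (cubeGenerators a b c d e f))) Y :=
  (D.rowsSpanSyzygies_mk hreg h2).isSMulRegular_quotient
    (mem_nonZeroDivisors_of_isWeaklyRegular hreg) D.syzygyMatrix_mulVec_cubeGenerators

theorem colon_span_pow_three_eq :
    Submodule.colon ((Ideal.span {a, b, c} ^ 3 : Ideal R) : Submodule R R)
      ((Ideal.span {X, Y, Z} ^ 2 : Ideal R) : Submodule R R) =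
        Ideal.span (Set.range (cubeGenerators a b c d e f)) :=
  colon_eq_of_isSMulRegular (D.span_pow_three_le_span_cubeGenerators h2)
    (D.span_sq_mul_span_cubeGenerators_le h2)
    (Ideal.pow_mem_pow (Ideal.subset_span (by simp)) 2)
    ((D.isSMulRegular_quotient_span_cubeGenerators hreg h2).pow 2)

variable [IsNoetherianRing R] [IsLocalRing R]

theorem symbolicPower_three_eq (hsop : (Ideal.span {Y, q * Z, X}).radical = maximalIdeal R) :
    symbolicPower (Ideal.span {a, b, c}) 3 =
      Ideal.span (Set.range (cubeGenerators a b c d e f)) := by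
  have hle : Ideal.span {Y, q * Z, X} ≤ maximalIdeal R := hsop ▸ Ideal.le_radical
  have hYm : Y ∈ maximalIdeal R := hle (Ideal.subset_span (by simp))
  refine symbolicPower_eq_of_isSMulRegular (N := 2) hYm
    (hsop ▸ Ideal.radical_le_radical_iff.2 D.span_le_radical_span_sup) ?_
    (D.span_pow_three_le_span_cubeGenerators h2) (fun s hs => ?_)
    (D.isSMulRegular_quotient_span_cubeGenerators hreg h2)
  · have hI : Ideal.span {a, b, c} ≤ maximalIdeal R := D.span_minors_le_span.trans hle
    exact ne_top_of_le_ne_top Ideal.IsPrime.ne_top' (D.span_cubeGenerators_le_span.trans hI)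
  · exact D.span_sq_mul_span_cubeGenerators_le h2
      (Ideal.mul_mem_mul (Ideal.pow_mem_pow (Ideal.subset_span (by simp)) 2) hs)

theorem length_span_cubeGenerators_quotient_of_isWeaklyRegular (hYm : Y ∈ maximalIdeal R) :
    Module.length R (↥(Ideal.span (Set.range (cubeGenerators a b c d e f))) ⧸
        Submodule.comap (Ideal.span (Set.range (cubeGenerators a b c d e f))).subtype
          (Ideal.span {a, b, c} ^ 3 : Ideal R)) =
      6 * Module.length R (R ⧸ Ideal.span {X, Y, Z}) := by
  have hY := mem_nonZeroDivisors_of_isWeaklyRegular hreg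
  have hZ := mem_regularBefore_of_dvd (mem_regularBefore_of_isWeaklyRegular hreg)
    (map_dvd (Ideal.Quotient.mk (Ideal.span {Y})) (dvd_mul_left Z q))
  rw [D.length_span_cubeGenerators_quotient h2
    ((D.rowsSpanSyzygies_mk hreg h2).of_quotient hY
      (by rwa [jacobson_eq_maximalIdeal _ bot_ne_top]) D.syzygyMatrix_mulVec_cubeGenerators)
    fun r hr => mem_span_range_of_dotProduct_eq_zero hY hZ hr, span_range_triple]

end WeaklyRegular

end MinorData

end SymbolicCube

theorem third_symbolic_power_two_unit_general
    {R : Type*} [CommRing R] [IsNoetherianRing R] [IsLocalRing R] {X Y Z p q : R}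
    (hreg : RingTheory.Sequence.IsWeaklyRegular R [Y, q * Z, X])
    (hsop : (Ideal.span {Y, q * Z, X}).radical = maximalIdeal R) (h2 : IsUnit (2 : R))
    {a b c : R} (ha : a = q * Z ^ 3 - X ^ 2 * Y) (hb : b = X ^ 3 - p * Y ^ 2 * Z)
    (hc : c = p * Y ^ 3 - q * X * Z ^ 2) {I Q J : Ideal R} (hI : I = Ideal.span {a, b, c})
    (hQ : Q = Ideal.span {X, Y, Z})
    (hJ : J = Submodule.colon ((I ^ 3 : Ideal R) : Submodule R R)
      ((Q ^ 2 : Ideal R) : Submodule R R)) :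
    (∃ r ∈ maximalIdeal R, IsSMulRegular (R ⧸ J) r) ∧
      symbolicPower I 3 = J ∧
      ∃ m : ℕ, HasLength R (R ⧸ Q) m ∧
        HasLength R (↥J ⧸ Submodule.comap J.subtype ((I ^ 3 : Ideal R) : Submodule R R))
          (6 * m) := by
  obtain ⟨d, e, f, D⟩ : ∃ d e f, MinorData X Y Z p q a b c d e f :=
    ⟨_, _, _, ha, hb, hc, rfl, rfl, rfl⟩
  have hYm : Y ∈ maximalIdeal R := hsop ▸ Ideal.le_radical (Ideal.subset_span (by simp))
  have hmQ : maximalIdeal R ≤ Q.radical := by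
    rw [← hsop, hQ]
    refine Ideal.radical_mono (Ideal.span_le.2 ?_)
    rintro _ (rfl | rfl | rfl)
    · exact Ideal.subset_span (by simp)
    · exact Ideal.mul_mem_left _ q (Ideal.subset_span (by simp))
    · exact Ideal.subset_span (by simp)
  rw [hI, hQ, D.colon_span_pow_three_eq hreg h2] at hJ
  obtain ⟨m, hm⟩ := ENat.ne_top_iff_exists.1 (length_quotient_ne_top hmQ)
  subst hI hQ hJ
  refine ⟨⟨Y, hYm, D.isSMulRegular_quotient_span_cubeGenerators hreg h2⟩,
    D.symbolicPower_three_eq hreg h2 hsop, m, hasLength_iff.2 hm.symm, hasLength_iff.2 ?_⟩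
  rw [D.length_span_cubeGenerators_quotient_of_isWeaklyRegular hreg h2 hYm, ← hm]
  norm_cast

/-- Assume `α = 1`, `α' = 2`, `2β ≤ β'`, `2γ ≤ γ'`, `Q = (x, y^β, z^γ)` and `2`
is a unit.  Then `depth R/(I³ :_R Q²) > 0` (i.e. the maximal ideal contains a
nonzerodivisor on `R/(I³ :_R Q²)`), so `I⁽³⁾ = I³ :_R Q²`, and
`length(I⁽³⁾/I³) = 6 · length(R/Q)`. -/
theorem third_symbolic_power_two_unit
    {R : Type*} [CommRing R] [IsNoetherianRing R] [IsLocalRing R]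
    (hdim : ringKrullDim R = 3)
    (hCM : ∀ u v w : R, (Ideal.span {u, v, w}).radical = maximalIdeal R →
      RingTheory.Sequence.IsRegular R [u, v, w])
    (x y z : R) (hsop : (Ideal.span {x, y, z}).radical = maximalIdeal R)
    (β γ β' γ' : ℕ)
    (hβ : 0 < β) (hγ : 0 < γ)
    (hββ' : 2 * β ≤ β') (hγγ' : 2 * γ ≤ γ')
    (a b c : R)
    (ha : a = z ^ (γ + γ') - x ^ 2 * y ^ β)
    (hb : b = x ^ 3 - y ^ β' * z ^ γ)
    (hc : c = y ^ (β + β') - x * z ^ γ')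
    (I : Ideal R) (hI : I = Ideal.span {a, b, c})
    (Q : Ideal R) (hQ : Q = Ideal.span {x, y ^ β, z ^ γ})
    (h2 : IsUnit (2 : R))
    (J : Ideal R)
    (hJ : J = Submodule.colon ((I ^ 3 : Ideal R) : Submodule R R)
      ((Q ^ 2 : Ideal R) : Submodule R R)) :
    (∃ r ∈ maximalIdeal R, IsSMulRegular (R ⧸ J) r) ∧
      symbolicPower I 3 = J ∧
      ∃ m : ℕ, HasLength R (R ⧸ Q) m ∧
        HasLength R (↥J ⧸ Submodule.comap J.subtype ((I ^ 3 : Ideal R) : Submodule R R))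
          (6 * m) := by
  obtain ⟨m, rfl⟩ := Nat.exists_eq_add_of_le hββ'
  obtain ⟨n, rfl⟩ := Nat.exists_eq_add_of_le hγγ'
  have hpar : (Ideal.span {y ^ β, z ^ n * z ^ γ, x}).radical = maximalIdeal R := by
    have hrot : ({y, z, x} : Set R) = {x, y, z} := by rw [Set.pair_comm, Set.insert_comm]
    have hpow := radical_span_triple_pow y z x hβ.ne' (by omega : n + γ ≠ 0) one_ne_zero
    rw [← pow_add, ← hsop, ← hrot, ← hpow, pow_one]
  exact third_symbolic_power_two_unit_general (p := y ^ m) (hCM _ _ _ hpar).toIsWeaklyRegular hpar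
    h2 (by rw [ha]; ring) (by rw [hb]; ring) (by rw [hc]; ring) hI hQ hJ
end
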